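/- For every w ∈ Λ, the number of ordered pairs (a,b) ∈ O₂ × O₄ with a + b = w equals 93150 if w ∈ O₂; 48600 if w ∈ O₃; 16192 if w ∈ O₄; 4050 if w ∈ O₅; 759 if w ∈ O_{6a}; 891 if w ∈ O_{6b}; 100 if w ∈ O₇; 8 if w ∈ O_{8b}; 1 if w ∈ O_{9a}; 1 if w ∈ O_{10b}; and 0 otherwise. Likewise, the number of ordered pairs (a,b) ∈ O₃ × O₃ with a + b = w equals 16773120 if w = 0; 953856 if w ∈ O₂; 257600 if w ∈ O₃; 64768 if w ∈ O₄; 14256 if w ∈ O₅; 2576 if w ∈ O_{6a}; 2816 if w ∈ O_{6b}; 352 if w ∈ O₇; 32 if w ∈ O_{8b}; 2 if w ∈ O_{9b}; 2 if w ∈ O_{10c}; 1 if w ∈ O_{12a}; and 0 otherwise. -/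

import Mathlib

open Complex Matrix UpperHalfPlane
open scoped Manifold MatrixGroups Real Topology BigOperators

noncomputable section

/-- Vectors of the rank-24 lattice (coordinates w.r.t. a fixed basis). -/
abbrev LV := Fin 24 → ℤ

/-- Complexified vectors. -/
abbrev CV := Fin 24 → ℂ

/-- The bilinear form attached to a Gram matrix `B`. -/
def pairZ (B : Matrix (Fin 24) (Fin 24) ℤ) (v u : LV) : ℤ := v ⬝ᵥ B.mulVec u

/-- The complex bilinear extension of the form. -/
def pairC (B : Matrix (Fin 24) (Fin 24) ℤ) (z w : CV) : ℂ :=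
  z ⬝ᵥ ((B.map (Int.cast : ℤ → ℂ)).mulVec w)

/-- Inclusion of lattice vectors into complexified vectors. -/
def liftC (v : LV) : CV := fun i => (v i : ℂ)

/-- `B` is a Gram matrix of the Leech lattice: even, unimodular, positive definite of
rank 24, with no vectors of norm 2 (no roots). -/
def IsLeech (B : Matrix (Fin 24) (Fin 24) ℤ) : Prop :=
  B.IsSymm ∧ B.det = 1 ∧ (∀ v : LV, v ≠ 0 → 0 < pairZ B v v) ∧
    (∀ v : LV, Even (pairZ B v v)) ∧ (∀ v : LV, pairZ B v v ≠ 2)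

/-- The automorphism group `Co₀ = Aut(Λ)` of the lattice, as a set of integral matrices. -/
def ConwayGroup (B : Matrix (Fin 24) (Fin 24) ℤ) : Set (Matrix (Fin 24) (Fin 24) ℤ) :=
  {σ | IsUnit σ.det ∧ σᵀ * B * σ = B}

/-- Action of an integral matrix on complexified vectors. -/
def actC (σ : Matrix (Fin 24) (Fin 24) ℤ) (z : CV) : CV :=
  (σ.map (Int.cast : ℤ → ℂ)).mulVec z

/-- `e(x) = exp(2πix)`. -/
def eC (x : ℂ) : ℂ := Complex.exp (2 * (Real.pi : ℂ) * Complex.I * x)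

/-- The Fourier term `qⁿ ζ^ℓ`. -/
def fterm (B : Matrix (Fin 24) (Fin 24) ℤ) (n : ℕ) (ℓ : LV) (τ : UpperHalfPlane) (z : CV) : ℂ :=
  eC ((n : ℂ) * (τ : ℂ)) * eC (pairC B (liftC ℓ) z)

/-- Lower-left entry of `A ∈ SL(2,ℤ)`, as a complex number. -/
def slc (A : SL(2, ℤ)) : ℂ := ((A : Matrix (Fin 2) (Fin 2) ℤ) 1 0 : ℤ)

/-- Lower-right entry of `A ∈ SL(2,ℤ)`, as a complex number. -/
def sld (A : SL(2, ℤ)) : ℂ := ((A : Matrix (Fin 2) (Fin 2) ℤ) 1 1 : ℤ)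

/-- The automorphy factor `cτ + d`. -/
def jfactor (A : SL(2, ℤ)) (τ : UpperHalfPlane) : ℂ := slc A * (τ : ℂ) + sld A

/-- `φ : ℍ × (Λ⊗ℂ) → ℂ` is a Conway invariant weak Jacobi form of weight `k` and index `t`
with Fourier coefficients `f`. -/
structure IsJacobiFormWith (B : Matrix (Fin 24) (Fin 24) ℤ) (k : ℤ) (t : ℕ)
    (φ : UpperHalfPlane → CV → ℂ) (f : ℕ → LV → ℂ) : Prop where
  holo_tau : ∀ z : CV, MDifferentiable 𝓘(ℂ) 𝓘(ℂ) fun τ : UpperHalfPlane => φ τ z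
  holo_z : ∀ τ : UpperHalfPlane, Differentiable ℂ (φ τ)
  conway_invar : ∀ σ ∈ ConwayGroup B, ∀ (τ : UpperHalfPlane) (z : CV), φ τ (actC σ z) = φ τ z
  quasi_periodic : ∀ (x y : LV) (τ : UpperHalfPlane) (z : CV),
    φ τ (z + (τ : ℂ) • liftC x + liftC y) =
      Complex.exp (-(t : ℂ) * (Real.pi : ℂ) * Complex.I * (pairZ B x x : ℂ) * (τ : ℂ)
        - 2 * (t : ℂ) * (Real.pi : ℂ) * Complex.I * pairC B (liftC x) z) * φ τ z
  modular : ∀ (A : SL(2, ℤ)) (τ : UpperHalfPlane) (z : CV),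
    φ (A • τ) ((jfactor A τ)⁻¹ • z) =
      (jfactor A τ) ^ k *
        Complex.exp ((t : ℂ) * (Real.pi : ℂ) * Complex.I * slc A * pairC B z z / jfactor A τ) *
        φ τ z
  expansion : ∀ (τ : UpperHalfPlane) (z : CV),
    HasSum (fun p : ℕ × LV => f p.1 p.2 * fterm B p.1 p.2 τ z) (φ τ z)

/-- Conway invariant weak Jacobi forms. -/
def IsWeakJacobiForm (B : Matrix (Fin 24) (Fin 24) ℤ) (k : ℤ) (t : ℕ)
    (φ : UpperHalfPlane → CV → ℂ) : Prop :=
  ∃ f, IsJacobiFormWith B k t φ f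

/-- Conway invariant holomorphic Jacobi forms. -/
def IsHolJacobiForm (B : Matrix (Fin 24) (Fin 24) ℤ) (k : ℤ) (t : ℕ)
    (φ : UpperHalfPlane → CV → ℂ) : Prop :=
  ∃ f, IsJacobiFormWith B k t φ f ∧
    ∀ (n : ℕ) (ℓ : LV), 2 * (n : ℤ) * t - pairZ B ℓ ℓ < 0 → f n ℓ = 0

/-- Modular forms of weight `k` on `SL₂(ℤ)`; the ring of all of them is `ℂ[E₄,E₆]`. -/
abbrev MForm (k : ℤ) := ModularForm (CongruenceSubgroup.Gamma 1) k

/-- The family `φ i` (of weights `w i`) freely generates the module of all forms satisfying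
`P` over the ring `M_*(SL₂(ℤ)) = ℂ[E₄,E₆]` of modular forms on `SL₂(ℤ)`. -/
def FreelyGenerates (P : ℤ → (UpperHalfPlane → CV → ℂ) → Prop) {n : ℕ}
    (w : Fin n → ℤ) (φ : Fin n → UpperHalfPlane → CV → ℂ) : Prop :=
  (∀ i, P (w i) (φ i)) ∧
  ∀ (k : ℤ) (ψ : UpperHalfPlane → CV → ℂ), P k ψ →
    ∃! g : (i : Fin n) → MForm (k - w i),
      ∀ (τ : UpperHalfPlane) (z : CV), ψ τ z = ∑ i, (g i) τ * φ i τ z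

/-- The point `(aτ+b)/d` of the upper half-plane (for `a, d > 0`). -/
def heckePt (a d b : ℕ) (τ : UpperHalfPlane) : UpperHalfPlane :=
  if h : 0 < ((((a : ℂ) * (τ : ℂ) + (b : ℂ)) / (d : ℂ)).im) then
    ⟨((a : ℂ) * (τ : ℂ) + (b : ℂ)) / (d : ℂ), h⟩ else τ

/-- The Hecke operator `T₋(m)` on Jacobi forms of weight `k`. -/
def heckeOp (k : ℤ) (m : ℕ) (φ : UpperHalfPlane → CV → ℂ) : UpperHalfPlane → CV → ℂ :=
  fun τ z => (m : ℂ)⁻¹ * ∑ d ∈ m.divisors, ∑ b ∈ Finset.range d,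
    ((m / d : ℕ) : ℂ) ^ k * φ (heckePt (m / d) d b τ) (((m / d : ℕ) : ℂ) • z)

/-- The Jacobi theta function `Θ_Λ = A₁` of the lattice. -/
def thetaLeech (B : Matrix (Fin 24) (Fin 24) ℤ) : UpperHalfPlane → CV → ℂ := fun τ z =>
  ∑' ℓ : LV, Complex.exp ((Real.pi : ℂ) * Complex.I * (pairZ B ℓ ℓ : ℂ) * (τ : ℂ)
    + 2 * (Real.pi : ℂ) * Complex.I * pairC B (liftC ℓ) z)

/-- `σ_k(n) = Σ_{d ∣ n} d^k`. -/
def sigmaNat (k n : ℕ) : ℕ := ∑ d ∈ n.divisors, d ^ k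

/-- `A_t = σ₁₁(t)⁻¹ (A₁ | T₋(t))`, a holomorphic Jacobi form of weight 12 and index `t`. -/
def Aform (B : Matrix (Fin 24) (Fin 24) ℤ) (t : ℕ) : UpperHalfPlane → CV → ℂ := fun τ z =>
  ((sigmaNat 11 t : ℂ))⁻¹ * heckeOp 12 t (thetaLeech B) τ z

/-- The quasimodular Eisenstein series `E₂`. -/
def E2 : UpperHalfPlane → ℂ := fun τ =>
  1 - 24 * ∑' n : ℕ, (sigmaNat 1 (n + 1) : ℂ) * eC (((n : ℂ) + 1) * (τ : ℂ))

/-- The discriminant cusp form `Δ(τ) = q ∏ (1-qⁿ)^24`. -/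
def DeltaForm : UpperHalfPlane → ℂ := fun τ =>
  eC (τ : ℂ) * ∏' n : ℕ, (1 - eC (((n : ℂ) + 1) * (τ : ℂ))) ^ 24

/-- `aτ`. -/
def scaleH (a : ℕ) (τ : UpperHalfPlane) : UpperHalfPlane := heckePt a 1 0 τ

/-- `(τ+j)/t`. -/
def sliceH (t j : ℕ) (τ : UpperHalfPlane) : UpperHalfPlane := heckePt 1 t j τ

/-- `f₂(τ) = (tE₂(tτ) - E₂(τ))/(t-1)`, a modular form of weight 2 on `Γ₀(t)`. -/
def f2w (t : ℕ) (τ : UpperHalfPlane) : ℂ := ((t : ℂ) * E2 (scaleH t τ) - E2 τ) / ((t : ℂ) - 1)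

/-- `B_t`, a holomorphic Jacobi form of weight 14 and index `t` (for `t` prime). -/
def Bform (B : Matrix (Fin 24) (Fin 24) ℤ) (t : ℕ) : UpperHalfPlane → CV → ℂ := fun τ z =>
  ((t : ℂ) ^ 12 / ((t : ℂ) ^ 12 - 1)) *
    (f2w t τ * thetaLeech B (scaleH t τ) ((t : ℂ) • z)
      - (t : ℂ) ^ (-13 : ℤ) *
        ∑ j ∈ Finset.range t, f2w t (sliceH t j τ) * thetaLeech B (sliceH t j τ) z)

/-- Fourier coefficients of `E₂`. -/
def e2coeff : ℕ → ℂ := fun m => if m = 0 then 1 else -24 * (sigmaNat 1 m : ℂ)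

/-- Fourier coefficients of the image `H_k(φ)` of the modified heat operator applied to a
Jacobi form of weight `k` and index `t` with Fourier coefficients `f`:
`H_k(φ) = 𝓗(φ) + ((12-k)/12)E₂φ` where `𝓗` multiplies `f(n,ℓ)` by `n - (ℓ,ℓ)/(2t)`. -/
def heatCoeff (B : Matrix (Fin 24) (Fin 24) ℤ) (k : ℤ) (t : ℕ) (f : ℕ → LV → ℂ) :
    ℕ → LV → ℂ := fun n ℓ =>
  ((n : ℂ) - (pairZ B ℓ ℓ : ℂ) / (2 * (t : ℂ))) * f n ℓ +
    ((12 - k : ℤ) : ℂ) / 12 * ∑ m ∈ Finset.range (n + 1), e2coeff m * f (n - m) ℓ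

/-- The function with Fourier coefficients `f`. -/
def fourierSeries (B : Matrix (Fin 24) (Fin 24) ℤ) (f : ℕ → LV → ℂ) :
    UpperHalfPlane → CV → ℂ := fun τ z =>
  ∑' p : ℕ × LV, f p.1 p.2 * fterm B p.1 p.2 τ z

/-- The family `Φ m = Φ_{12,m}` of Fourier–Jacobi coefficients of the Borcherds form `Φ₁₂`
at the Leech cusp:
`Δ(τ)·exp(−Σ_{m≥1}((Δ⁻¹A₁)|T₋(m))(τ,𝔷)e^{2πimω}) = Σ_{m≥0} Φ_{12,m}(τ,𝔷)e^{2πimω}`. -/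
def IsFJExpansionOfPhi12 (B : Matrix (Fin 24) (Fin 24) ℤ)
    (Φ : ℕ → UpperHalfPlane → CV → ℂ) : Prop :=
  ∀ (τ ω : UpperHalfPlane) (z : CV),
    HasSum (fun m : ℕ => Φ m τ z * eC ((m : ℂ) * (ω : ℂ)))
      (DeltaForm τ * Complex.exp
        (- ∑' m : ℕ, heckeOp 0 (m + 1) (fun σ w => thetaLeech B σ w / DeltaForm σ) τ z *
            eC (((m : ℂ) + 1) * (ω : ℂ))))

/-- `S_t`: the set of lattice vectors of minimal norm in their coset modulo `tΛ`. -/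
def minimalSet (B : Matrix (Fin 24) (Fin 24) ℤ) (t : ℕ) : Set LV :=
  {v | ∀ u : LV, (∃ w : LV, u = v + (t : ℤ) • w) → pairZ B v v ≤ pairZ B u u}

/-- `v` and `u` are conjugate modulo `tΛ` up to the Conway group. -/
def conjModT (B : Matrix (Fin 24) (Fin 24) ℤ) (t : ℕ) (v u : LV) : Prop :=
  ∃ σ ∈ ConwayGroup B, ∃ w : LV, v - σ.mulVec u = (t : ℤ) • w

/-- `s(t) = |(S_t/Co₀)/tΛ|`. -/
def sRank (B : Matrix (Fin 24) (Fin 24) ℤ) (t : ℕ) : ℕ :=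
  Nat.card (Quot (fun v u : minimalSet B t => conjModT B t v.1 u.1))

/-- `R` is a system of representatives for `(S_t/Co₀)/tΛ` (of minimal length). -/
def IsRepSystem (B : Matrix (Fin 24) (Fin 24) ℤ) (t : ℕ) (R : Finset LV) : Prop :=
  (↑R ⊆ minimalSet B t) ∧ ∀ v ∈ minimalSet B t, ∃! r, r ∈ R ∧ conjModT B t v r

/-- The Conway orbit of a lattice vector. -/
def orbitOf (B : Matrix (Fin 24) (Fin 24) ℤ) (v : LV) : Set LV :=
  {u | ∃ σ ∈ ConwayGroup B, u = σ.mulVec v}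

/-- `O` is a Conway orbit of Leech vectors of type `x` (i.e. norm `2x`) with `c` elements. -/
def OrbitData (B : Matrix (Fin 24) (Fin 24) ℤ) (O : Set LV) (x c : ℕ) : Prop :=
  (∃ v : LV, O = orbitOf B v) ∧ (∀ v ∈ O, pairZ B v v = 2 * (x : ℤ)) ∧ Nat.card O = c

/-- `W` is a `d`-dimensional subspace of the space of functions `ℍ × (Λ⊗ℂ) → ℂ`. -/
def SpanDimIs (W : (UpperHalfPlane → CV → ℂ) → Prop) (d : ℕ) : Prop :=
  ∃ φ : Fin d → UpperHalfPlane → CV → ℂ, (∀ i, W (φ i)) ∧ LinearIndependent ℂ φ ∧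
    ∀ ψ, W ψ → ∃ c : Fin d → ℂ, ψ = ∑ i, c i • φ i

/-!
The pairs `(a, b)` of vectors of types `k` and `l` with sum `w` correspond to the vectors `a` of
type `k` with `(a, w) = k + vtype w - l`, so everything reduces to such inner product counts.

By Conway's argument, congruent vectors of type at most 4 modulo `2Λ` are equal up to sign or
belong to a frame, that is, 48 vectors of type 4 that are pairwise opposite or orthogonal. As
`1 + |O₂|/2 + |O₃|/2 + |O₄|/48 = 2 ^ 24`, every class contains vectors of exactly one of the types
0, 2, 3, 4, and the given orbits exhaust the vectors of types 2, 3 and 4. The map `a ↦ 2a - w` turns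
many inner product counts for `w` into counts inside the class of `w`; the remaining ones follow
from the second moments of the shells, from double counting over orbits, and, for vectors of type 6
congruent to a vector of type 4, from sign changes in the frame of that vector.

The orbits of types 6 to 10 are then recognised by their sizes among the sets of vectors with a
given type that lie in classes of a given kind or that are sums of two short vectors of given types.
-/

variable {B : Matrix (Fin 24) (Fin 24) ℤ}

section Pairing

lemma pairZ_add_left (u v w : LV) : pairZ B (u + v) w = pairZ B u w + pairZ B v w :=
  add_dotProduct ..

lemma pairZ_add_right (u v w : LV) : pairZ B u (v + w) = pairZ B u v + pairZ B u w := by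
  simp only [pairZ, mulVec_add, dotProduct_add]

lemma pairZ_neg_left (u v : LV) : pairZ B (-u) v = -pairZ B u v :=
  neg_dotProduct ..

lemma pairZ_neg_right (u v : LV) : pairZ B u (-v) = -pairZ B u v := by
  simp only [pairZ, mulVec_neg, dotProduct_neg]

lemma pairZ_sub_left (u v w : LV) : pairZ B (u - v) w = pairZ B u w - pairZ B v w :=
  sub_dotProduct ..

lemma pairZ_sub_right (u v w : LV) : pairZ B u (v - w) = pairZ B u v - pairZ B u w := by
  simp only [pairZ, mulVec_sub, dotProduct_sub]

lemma pairZ_smul_left (c : ℤ) (u v : LV) : pairZ B (c • u) v = c * pairZ B u v :=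
  smul_dotProduct ..

lemma pairZ_smul_right (c : ℤ) (u v : LV) : pairZ B u (c • v) = c * pairZ B u v := by
  simp only [pairZ, mulVec_smul, dotProduct_smul, smul_eq_mul]

lemma pairZ_zero_right (v : LV) : pairZ B v 0 = 0 := by
  simp only [pairZ, mulVec_zero, dotProduct_zero]

lemma pairZ_sum_left {ι : Type*} (s : Finset ι) (f : ι → LV) (v : LV) :
    pairZ B (∑ i ∈ s, f i) v = ∑ i ∈ s, pairZ B (f i) v :=
  sum_dotProduct ..

lemma IsLeech.pairZ_comm (hB : IsLeech B) (u v : LV) : pairZ B u v = pairZ B v u := by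
  rw [pairZ, dotProduct_mulVec, ← mulVec_transpose, hB.1, dotProduct_comm, pairZ]

end Pairing

section VectorType

/-- The type `½(v,v)` of a lattice vector; the integer division is exact on an even lattice. -/
def vtype (B : Matrix (Fin 24) (Fin 24) ℤ) (v : LV) : ℤ := pairZ B v v / 2

lemma vtype_neg (v : LV) : vtype B (-v) = vtype B v := by
  simp only [vtype, pairZ_neg_left, pairZ_neg_right, neg_neg]

lemma vtype_zero : vtype B 0 = 0 := by
  simp [vtype, pairZ_zero_right]

namespace IsLeech

lemma pairZ_self (hB : IsLeech B) (v : LV) : pairZ B v v = 2 * vtype B v :=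
  (Int.two_mul_ediv_two_of_even (hB.2.2.2.1 v)).symm

lemma vtype_add (hB : IsLeech B) (u v : LV) :
    vtype B (u + v) = vtype B u + vtype B v + pairZ B u v := by
  have expand := hB.pairZ_self (u + v)
  rw [pairZ_add_left, pairZ_add_right, pairZ_add_right] at expand
  linarith [hB.pairZ_self u, hB.pairZ_self v, hB.pairZ_comm u v]

lemma vtype_sub (hB : IsLeech B) (u v : LV) :
    vtype B (u - v) = vtype B u + vtype B v - pairZ B u v := by
  rw [sub_eq_add_neg, hB.vtype_add, vtype_neg, pairZ_neg_right, sub_eq_add_neg]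

lemma vtype_two_smul (hB : IsLeech B) (v : LV) : vtype B ((2 : ℤ) • v) = 4 * vtype B v := by
  rw [two_smul, hB.vtype_add, hB.pairZ_self]
  ring

lemma two_le_vtype (hB : IsLeech B) {v : LV} (hv : v ≠ 0) : 2 ≤ vtype B v := by
  have := hB.2.2.1 v hv
  have := hB.2.2.2.2 v
  have := hB.pairZ_self v
  omega

lemma eq_zero_of_vtype_lt_two (hB : IsLeech B) {v : LV} (hv : vtype B v < 2) : v = 0 := by
  by_contra h
  exact (hB.two_le_vtype h).not_gt hv

lemma vtype_nonneg (hB : IsLeech B) (v : LV) : 0 ≤ vtype B v := by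
  rcases eq_or_ne v 0 with rfl | hv
  · exact vtype_zero.ge
  · linarith [hB.two_le_vtype hv]

lemma abs_pairZ_le (hB : IsLeech B) (u v : LV) : |pairZ B u v| ≤ vtype B u + vtype B v := by
  have := hB.vtype_add u v ▸ hB.vtype_nonneg (u + v)
  have := hB.vtype_sub u v ▸ hB.vtype_nonneg (u - v)
  exact abs_le.mpr ⟨by linarith, by linarith⟩

lemma pairZ_le (hB : IsLeech B) {u v : LV} (h : u ≠ v) :
    pairZ B u v ≤ vtype B u + vtype B v - 2 := by
  linarith [hB.vtype_sub u v, hB.two_le_vtype (sub_ne_zero.mpr h)]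

lemma neg_pairZ_le (hB : IsLeech B) {u v : LV} (h : u ≠ -v) :
    -pairZ B u v ≤ vtype B u + vtype B v - 2 := by
  simpa only [pairZ_neg_right, vtype_neg] using hB.pairZ_le h

lemma exists_pairZ_eq_apply (hB : IsLeech B) (i : Fin 24) : ∃ u : LV, ∀ v, pairZ B v u = v i := by
  refine ⟨B⁻¹ *ᵥ Pi.single i 1, fun v => ?_⟩
  rw [pairZ, mulVec_mulVec, Matrix.mul_nonsing_inv B (hB.2.1 ▸ isUnit_one), one_mulVec,
    dotProduct_single, mul_one]

lemma finite_vtype_eq (hB : IsLeech B) (k : ℤ) : {v | vtype B v = k}.Finite := by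
  choose u hu using hB.exists_pairZ_eq_apply
  let bound (i : Fin 24) : ℤ := k + vtype B (u i)
  refine (Set.Finite.pi' fun i => Set.finite_Icc (-bound i) (bound i)).subset fun v hv i => ?_
  simp only [bound]
  rw [← hu i v, ← (hv : vtype B v = k)]
  exact abs_le.mp (hB.abs_pairZ_le v (u i))

/-- The finite set of lattice vectors of type `k`. -/
def shell (hB : IsLeech B) (k : ℤ) : Finset LV := (hB.finite_vtype_eq k).toFinset

@[simp]
lemma mem_shell {hB : IsLeech B} {k : ℤ} {v : LV} : v ∈ hB.shell k ↔ vtype B v = k :=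
  Set.Finite.mem_toFinset _

end IsLeech

end VectorType

section ModTwo

/-- Reduction modulo `2Λ`. -/
def modTwo : LV →+ (Fin 24 → ZMod 2) := (Int.castAddHom (ZMod 2)).compLeft (Fin 24)

lemma modTwo_surjective : Function.Surjective modTwo := fun x =>
  ⟨fun i => (x i).val, funext fun i => by simp [modTwo]⟩

lemma modTwo_neg (v : LV) : modTwo (-v) = modTwo v := by
  rw [map_neg]
  exact funext fun i => ZMod.neg_eq_self_mod_two _

lemma modTwo_two_smul (v : LV) : modTwo ((2 : ℤ) • v) = 0 := by
  rw [two_smul, map_add]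
  nth_rewrite 2 [← modTwo_neg]
  rw [← map_add, add_neg_cancel, map_zero]

lemma modTwo_eq_zero_iff {v : LV} : modTwo v = 0 ↔ ∃ x : LV, v = (2 : ℤ) • x := by
  refine ⟨fun h => ?_, fun ⟨x, hx⟩ => hx ▸ modTwo_two_smul x⟩
  have hdvd : ∀ i, ∃ x : ℤ, v i = 2 * x := fun i =>
    (ZMod.intCast_zmod_eq_zero_iff_dvd (v i) 2).mp (congrFun h i)
  choose x hx using hdvd
  exact ⟨x, funext hx⟩

lemma modTwo_eq_iff {u v : LV} : modTwo u = modTwo v ↔ ∃ x : LV, u = v + (2 : ℤ) • x := by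
  rw [← sub_eq_zero, ← map_sub, modTwo_eq_zero_iff]
  exact exists_congr fun x => by rw [sub_eq_iff_eq_add']

lemma pairZ_emod_two {u v : LV} (h : modTwo u = modTwo v) (a : LV) :
    pairZ B a u % 2 = pairZ B a v % 2 := by
  obtain ⟨x, rfl⟩ := modTwo_eq_iff.mp h
  rw [pairZ_add_right, pairZ_smul_right, Int.add_mul_emod_self_left]

namespace IsLeech

lemma vtype_emod_two (hB : IsLeech B) {u v : LV} (h : modTwo u = modTwo v) :
    vtype B u % 2 = vtype B v % 2 := by
  obtain ⟨x, rfl⟩ := modTwo_eq_iff.mp h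
  rw [hB.vtype_add, hB.vtype_two_smul, pairZ_smul_right]
  omega

lemma exists_half_add_sub (hB : IsLeech B) {s w : LV} (h : modTwo s = modTwo w) :
    ∃ a b : LV, w = a + b ∧ s = a - b ∧ 4 * vtype B a = vtype B s + vtype B w + pairZ B s w ∧
      4 * vtype B b = vtype B s + vtype B w - pairZ B s w := by
  obtain ⟨x, rfl⟩ := modTwo_eq_iff.mp h
  refine ⟨w + x, -x, by abel, by rw [two_smul]; abel, ?_, ?_⟩
  · rw [← hB.vtype_two_smul, ← hB.vtype_add]
    congr 1
    simp only [two_smul]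
    abel
  · rw [vtype_neg, ← hB.vtype_two_smul, ← hB.vtype_sub, add_sub_cancel_left]

lemma exists_half_types (hB : IsLeech B) {s w : LV} (h : modTwo s = modTwo w) (hne : s ≠ w)
    (hne' : s ≠ -w) : ∃ α β : ℤ, 2 ≤ α ∧ 2 ≤ β ∧ 4 * α = vtype B s + vtype B w + pairZ B s w ∧
      4 * β = vtype B s + vtype B w - pairZ B s w := by
  obtain ⟨a, b, rfl, rfl, ha, hb⟩ := hB.exists_half_add_sub h
  refine ⟨vtype B a, vtype B b, hB.two_le_vtype ?_, hB.two_le_vtype ?_, ha, hb⟩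
  · rintro rfl
    simp at hne'
  · rintro rfl
    simp at hne

lemma eq_or_eq_neg_or_orthogonal (hB : IsLeech B) {u v : LV} (h : modTwo u = modTwo v)
    (hu : vtype B u ≤ 4) (hv : vtype B v ≤ 4) :
    u = v ∨ u = -v ∨ (vtype B u = 4 ∧ vtype B v = 4 ∧ pairZ B u v = 0) := by
  by_cases hne : u = v
  · exact .inl hne
  by_cases hne' : u = -v
  · exact .inr (.inl hne')
  obtain ⟨α, β, hα, hβ, hα', hβ'⟩ := hB.exists_half_types h hne hne'
  exact .inr (.inr ⟨by omega, by omega, by omega⟩)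

/-- The vectors of type `k` congruent to `w` modulo `2Λ`. -/
def classShell (hB : IsLeech B) (k : ℤ) (w : LV) : Finset LV :=
  {s ∈ hB.shell k | modTwo s = modTwo w}

@[simp]
lemma mem_classShell {hB : IsLeech B} {k : ℤ} {s w : LV} :
    s ∈ hB.classShell k w ↔ vtype B s = k ∧ modTwo s = modTwo w := by
  simp [classShell]

lemma classShell_congr (hB : IsLeech B) {w w' : LV} (k : ℤ) (h : modTwo w = modTwo w') :
    hB.classShell k w = hB.classShell k w' := by
  simp only [classShell, h]

lemma neg_mem_shell {hB : IsLeech B} {k : ℤ} : ∀ s ∈ hB.shell k, -s ∈ hB.shell k := by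
  simp [vtype_neg]

lemma neg_mem_classShell {hB : IsLeech B} {k : ℤ} {w : LV} :
    ∀ s ∈ hB.classShell k w, -s ∈ hB.classShell k w := by
  simp +contextual [vtype_neg, modTwo_neg]

end IsLeech

end ModTwo

section Orthogonal

lemma matrix_mul_eq_smul_one_comm {n R : Type*} [Fintype n] [DecidableEq n] [CommRing R]
    [IsDomain R] {F C : Matrix n n R} {c : R} (hc : c ≠ 0) (h : F * C = c • 1) :
    C * F = c • 1 := by
  have hdet : F.det ≠ 0 := fun h0 => pow_ne_zero (Fintype.card n) hc <| by
    simpa [h0] using (congrArg det h).symm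
  refine (isRegular_of_isLeftRegular_det (IsRegular.of_ne_zero hdet).left).left ?_
  simp only [← Matrix.mul_assoc, h, Matrix.smul_mul, Matrix.mul_smul, Matrix.one_mul,
    Matrix.mul_one]

/-- A set of pairwise orthogonal vectors of common norm `m`. -/
structure IsOrthogonalSet (B : Matrix (Fin 24) (Fin 24) ℤ) (m : ℤ) (H : Finset LV) : Prop where
  pairZ_self : ∀ f ∈ H, pairZ B f f = m
  pairZ_eq_zero : ∀ f ∈ H, ∀ g ∈ H, f ≠ g → pairZ B f g = 0

namespace IsOrthogonalSet

variable {m : ℤ} {H K : Finset LV}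

lemma mono (hH : IsOrthogonalSet B m H) (hK : K ⊆ H) : IsOrthogonalSet B m K :=
  ⟨fun f hf => hH.pairZ_self f (hK hf), fun f hf g hg => hH.pairZ_eq_zero f (hK hf) g (hK hg)⟩

theorem parseval (hH : IsOrthogonalSet B m H) (hm : m ≠ 0) (hcard : H.card = 24) (u v : LV) :
    ∑ f ∈ H, pairZ B u f * pairZ B f v = m * pairZ B u v := by
  let e : Fin 24 ≃ H := (Fintype.equivFinOfCardEq (by simp [hcard])).symm
  let F : Matrix (Fin 24) (Fin 24) ℤ := Matrix.of fun i => (e i : LV)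
  have gram : F * (B * Fᵀ) = m • 1 := by
    ext i j
    have hij : (F * (B * Fᵀ)) i j = pairZ B (e i) (e j) := rfl
    rcases eq_or_ne i j with rfl | hne
    · simp [hij, hH.pairZ_self _ (e i).2]
    · rw [hij, hH.pairZ_eq_zero _ (e i).2 _ (e j).2 fun h => hne (e.injective (Subtype.ext h))]
      simp [hne]
  have dual : B * Fᵀ * F = m • 1 := matrix_mul_eq_smul_one_comm hm gram
  calc ∑ f ∈ H, pairZ B u f * pairZ B f v
      = ∑ i, pairZ B u (e i) * pairZ B (e i) v := by
        rw [← Finset.sum_coe_sort, ← e.sum_comp]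
    _ = (u ᵥ* (B * Fᵀ)) ⬝ᵥ (F *ᵥ (B *ᵥ v)) := rfl
    _ = m * pairZ B u v := by
        rw [← dotProduct_mulVec, mulVec_mulVec, dual, smul_mulVec, one_mulVec, dotProduct_smul,
          smul_eq_mul, pairZ]

lemma card_le (hH : IsOrthogonalSet B m H) (hm : m ≠ 0) : H.card ≤ 24 := by
  by_contra! hlt
  obtain ⟨K, hK, hcard⟩ := Finset.exists_subset_card_eq hlt.le
  obtain ⟨g, hg, hgK⟩ := Finset.exists_mem_notMem_of_card_lt_card (hcard.trans_lt hlt)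
  have hsum := (hH.mono hK).parseval hm hcard g g
  rw [Finset.sum_eq_zero fun f hf => by
    rw [hH.pairZ_eq_zero f (hK hf) g hg (ne_of_mem_of_not_mem hf hgK), mul_zero],
    hH.pairZ_self g hg] at hsum
  exact mul_self_ne_zero.mpr hm hsum.symm

end IsOrthogonalSet

namespace IsLeech

lemma isOrthogonalSet_filter (hB : IsLeech B) (w : LV) (P : LV → Prop) [DecidablePred P]
    (hP : ∀ f ≠ 0, P f → ¬ P (-f)) : IsOrthogonalSet B 8 {f ∈ hB.classShell 4 w | P f} where
  pairZ_self f hf := by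
    simp only [Finset.mem_filter, mem_classShell] at hf
    rw [hB.pairZ_self, hf.1.1]
    rfl
  pairZ_eq_zero f hf g hg hne := by
    simp only [Finset.mem_filter, mem_classShell] at hf hg
    rcases hB.eq_or_eq_neg_or_orthogonal (hf.1.2.trans hg.1.2.symm) hf.1.1.le hg.1.1.le with
      rfl | rfl | ⟨-, -, h⟩
    · exact absurd rfl hne
    · exact absurd hf.2 (hP g (by rintro rfl; simp [vtype_zero] at hg) hg.2)
    · exact h

lemma exists_orthogonal_halves (hB : IsLeech B) (w : LV) :
    ∃ H K : Finset LV, IsOrthogonalSet B 8 H ∧ IsOrthogonalSet B 8 K ∧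
      ∃ h : Disjoint H K, hB.classShell 4 w = H.disjUnion K h := by
  classical
  refine ⟨{f ∈ hB.classShell 4 w | 0 < toLex f}, {f ∈ hB.classShell 4 w | ¬ 0 < toLex f},
    hB.isOrthogonalSet_filter w _ fun _ _ h h' => lt_asymm h (neg_pos.mp h'),
    hB.isOrthogonalSet_filter w _ fun f h0 h h' =>
      h' (neg_pos.mpr (lt_of_le_of_ne (not_lt.mp h) h0)),
    Finset.disjoint_filter_filter_not .., ?_⟩
  rw [Finset.disjUnion_eq_union, Finset.filter_union_filter_not_eq]

lemma card_classShell_four_le (hB : IsLeech B) (w : LV) : (hB.classShell 4 w).card ≤ 48 := by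
  obtain ⟨H, K, hH, hK, hdisj, hunion⟩ := hB.exists_orthogonal_halves w
  rw [hunion, Finset.card_disjUnion]
  exact add_le_add (hH.card_le (by norm_num)) (hK.card_le (by norm_num))

theorem sum_classShell_four (hB : IsLeech B) {w : LV} (hcard : (hB.classShell 4 w).card = 48)
    (u v : LV) : ∑ f ∈ hB.classShell 4 w, pairZ B u f * pairZ B f v = 16 * pairZ B u v := by
  obtain ⟨H, K, hH, hK, hdisj, hunion⟩ := hB.exists_orthogonal_halves w
  have hHcard := hH.card_le (by norm_num)
  have hKcard := hK.card_le (by norm_num)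
  rw [hunion, Finset.card_disjUnion] at hcard
  rw [hunion, Finset.sum_disjUnion, hH.parseval (by norm_num) (by omega),
    hK.parseval (by norm_num) (by omega)]
  ring

end IsLeech

end Orthogonal

section Isometries

/-- The group of linear automorphisms of the lattice preserving the bilinear form, acting on
lattice vectors by evaluation. -/
def isometryGroup (B : Matrix (Fin 24) (Fin 24) ℤ) : Subgroup (LV ≃ₗ[ℤ] LV) where
  carrier := {e | ∀ u v, pairZ B (e u) (e v) = pairZ B u v}
  mul_mem' he he' u v := (he _ _).trans (he' u v)
  one_mem' _ _ := rfl
  inv_mem' {e} he u v := by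
    rw [← he]
    exact congrArg₂ _ (e.apply_symm_apply u) (e.apply_symm_apply v)

lemma pairZ_smul_smul (g : isometryGroup B) (u v : LV) :
    pairZ B (g • u) (g • v) = pairZ B u v :=
  g.2 u v

lemma vtype_smul (g : isometryGroup B) (v : LV) : vtype B (g • v) = vtype B v :=
  congrArg (· / 2) (pairZ_smul_smul g v v)

lemma modTwo_smul (g : isometryGroup B) {u v : LV} (h : modTwo u = modTwo v) :
    modTwo (g • u) = modTwo (g • v) := by
  obtain ⟨x, rfl⟩ := modTwo_eq_iff.mp h
  exact modTwo_eq_iff.mpr ⟨g • x, by rw [smul_add, smul_comm]⟩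

lemma exists_isometry_of_mem_conwayGroup {σ : Matrix (Fin 24) (Fin 24) ℤ}
    (hσ : σ ∈ ConwayGroup B) : ∃ g : isometryGroup B, ∀ v, g • v = σ *ᵥ v := by
  refine ⟨⟨Matrix.toLin'OfInv (Matrix.nonsing_inv_mul σ hσ.1) (Matrix.mul_nonsing_inv σ hσ.1),
    fun u v => ?_⟩, fun v => toLin'_apply σ v⟩
  change pairZ B (σ *ᵥ u) (σ *ᵥ v) = _
  conv_rhs => rw [pairZ, ← hσ.2]
  rw [pairZ, ← mulVec_mulVec, ← mulVec_mulVec, dotProduct_mulVec u, vecMul_transpose]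

lemma IsLeech.exists_mem_conwayGroup (hB : IsLeech B) (g : isometryGroup B) :
    ∃ σ ∈ ConwayGroup B, ∀ v, g • v = σ *ᵥ v := by
  let σ := LinearMap.toMatrix' (g : LV ≃ₗ[ℤ] LV).toLinearMap
  have action (v : LV) : g • v = σ *ᵥ v := (LinearMap.toMatrix'_mulVec _ v).symm
  have gram : σᵀ * B * σ = B := by
    ext i j
    have h := pairZ_smul_smul g (Pi.single i 1) (Pi.single j 1)
    rw [action, action, pairZ, mulVec_mulVec, ← vecMul_transpose, ← dotProduct_mulVec,
      mulVec_mulVec, ← Matrix.mul_assoc] at h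
    simpa [pairZ] using h
  have det_mul_det := congrArg det gram
  rw [det_mul, det_mul, hB.2.1, mul_one] at det_mul_det
  exact ⟨σ, ⟨IsUnit.of_mul_eq_one_right _ det_mul_det, gram⟩, action⟩

lemma IsLeech.orbitOf_eq_orbit (hB : IsLeech B) (v : LV) :
    orbitOf B v = MulAction.orbit (isometryGroup B) v := by
  ext u
  constructor
  · rintro ⟨σ, hσ, rfl⟩
    obtain ⟨g, hg⟩ := exists_isometry_of_mem_conwayGroup hσ
    exact ⟨g, hg v⟩
  · rintro ⟨g, rfl⟩
    obtain ⟨σ, hσ, h⟩ := hB.exists_mem_conwayGroup g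
    exact ⟨σ, hσ, h v⟩

namespace OrbitData

variable {O : Set LV} {x c : ℕ}

lemma vtype_eq (hO : OrbitData B O x c) {v : LV} (hv : v ∈ O) : vtype B v = x := by
  rw [vtype, hO.2.1 v hv, Int.mul_ediv_cancel_left _ two_ne_zero]

lemma eq_orbit (hO : OrbitData B O x c) (hB : IsLeech B) {v : LV} (hv : v ∈ O) :
    O = MulAction.orbit (isometryGroup B) v := by
  obtain ⟨⟨r, rfl⟩, -⟩ := hO
  rw [hB.orbitOf_eq_orbit] at hv ⊢
  exact (MulAction.orbit_eq_iff.mpr hv).symm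

lemma exists_smul_eq (hO : OrbitData B O x c) (hB : IsLeech B) {u v : LV} (hu : u ∈ O)
    (hv : v ∈ O) : ∃ g : isometryGroup B, g • u = v := by
  rw [hO.eq_orbit hB hu] at hv
  exact hv

end OrbitData

end Isometries

section ShortVectors

namespace IsLeech

lemma card_classShell_le_two (hB : IsLeech B) {k : ℤ} (hk : k < 4) (w : LV) :
    (hB.classShell k w).card ≤ 2 := by
  rcases (hB.classShell k w).eq_empty_or_nonempty with h | ⟨u, hu⟩
  · simp [h]
  refine (Finset.card_le_card fun v hv => ?_).trans (Finset.card_le_two (a := u) (b := -u))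
  simp only [mem_classShell, Finset.mem_insert, Finset.mem_singleton] at hu hv ⊢
  rcases hB.eq_or_eq_neg_or_orthogonal (hv.2.trans hu.2.symm) (by omega) (by omega) with
    h | h | ⟨h, -⟩
  · exact .inl h
  · exact .inr h
  · omega

/-- The classes modulo `2Λ` represented by vectors of type `k`. -/
def classes (hB : IsLeech B) (k : ℤ) : Finset (Fin 24 → ZMod 2) := (hB.shell k).image modTwo

@[simp]
lemma mem_classes {hB : IsLeech B} {k : ℤ} {x : Fin 24 → ZMod 2} :
    x ∈ hB.classes k ↔ ∃ v, vtype B v = k ∧ modTwo v = x := by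
  simp [classes]

lemma card_shell_le_mul_card_classes (hB : IsLeech B) {k : ℤ} {n : ℕ}
    (h : ∀ w, (hB.classShell k w).card ≤ n) : (hB.shell k).card ≤ n * (hB.classes k).card := by
  refine Finset.card_le_mul_card_image _ _ fun x _ => ?_
  obtain ⟨w, rfl⟩ := modTwo_surjective x
  exact h w

lemma disjoint_classes (hB : IsLeech B) {k l : ℤ} (hk : k ≤ 4) (hl : l ≤ 4) (hne : k ≠ l) :
    Disjoint (hB.classes k) (hB.classes l) := by
  refine Finset.disjoint_left.mpr fun x hk' hl' => ?_
  obtain ⟨u, hu, rfl⟩ := mem_classes.mp hk'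
  obtain ⟨v, hv, hvu⟩ := mem_classes.mp hl'
  rcases hB.eq_or_eq_neg_or_orthogonal hvu (by omega) (by omega) with rfl | rfl | ⟨h, h', -⟩
  · omega
  · rw [vtype_neg] at hv
    omega
  · omega

/-- The classes modulo `2Λ` represented by vectors of type at most `4`. -/
def shortClasses (hB : IsLeech B) : Finset (Fin 24 → ZMod 2) :=
  ({0, 2, 3, 4} : Finset ℤ).biUnion hB.classes

lemma card_shortClasses (hB : IsLeech B) : hB.shortClasses.card =
    1 + (hB.classes 2).card + (hB.classes 3).card + (hB.classes 4).card := by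
  have classes_zero : hB.classes 0 = {0} := by
    ext x
    simp only [mem_classes, Finset.mem_singleton]
    constructor
    · rintro ⟨v, hv, rfl⟩
      rw [hB.eq_zero_of_vtype_lt_two (v := v) (by omega), map_zero]
    · rintro rfl
      exact ⟨0, vtype_zero, map_zero _⟩
  rw [shortClasses, Finset.card_biUnion]
  · simp [classes_zero, add_assoc]
  · intro k hk l hl
    simp only [Finset.coe_insert, Finset.coe_singleton, Set.mem_insert_iff,
      Set.mem_singleton_iff] at hk hl
    exact hB.disjoint_classes (by omega) (by omega)

lemma card_shortClasses_le (hB : IsLeech B) : hB.shortClasses.card ≤ 2 ^ 24 := by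
  simpa using Finset.card_le_univ hB.shortClasses

lemma exists_vtype_le_four (hB : IsLeech B) (h : 2 ^ 24 ≤ hB.shortClasses.card) (v : LV) :
    ∃ s, modTwo s = modTwo v ∧ vtype B s ≤ 4 := by
  have huniv : hB.shortClasses = Finset.univ := Finset.eq_univ_of_card _
    (hB.card_shortClasses_le.antisymm h |>.trans (by simp))
  have hv : modTwo v ∈ hB.shortClasses := huniv ▸ Finset.mem_univ _
  simp only [shortClasses, Finset.mem_biUnion, mem_classes] at hv
  obtain ⟨k, hk, s, hs, hsv⟩ := hv
  simp only [Finset.mem_insert, Finset.mem_singleton] at hk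
  exact ⟨s, hsv, by omega⟩

/-- All classes attain the bound `48` once the average does. -/
lemma card_classShell_four_eq (hB : IsLeech B)
    (h : 48 * (hB.classes 4).card ≤ (hB.shell 4).card) {f : LV} (hf : vtype B f = 4) :
    (hB.classShell 4 f).card = 48 := by
  have hle : ∀ x ∈ hB.classes 4, ({v ∈ hB.shell 4 | modTwo v = x} : Finset LV).card ≤ 48 := by
    intro x _
    obtain ⟨w, rfl⟩ := modTwo_surjective x
    exact hB.card_classShell_four_le w
  have hsum := Finset.card_eq_sum_card_image modTwo (hB.shell 4)
  refine (Finset.sum_eq_sum_iff_of_le hle).mp (hsum.symm.trans ?_) (modTwo f)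
    (mem_classes.mpr ⟨f, hf, rfl⟩)
  refine le_antisymm ?_ (by simpa [mul_comm] using h)
  exact hsum.trans_le (Finset.sum_le_sum hle)

end IsLeech

/-- The numbers of vectors of types 2, 3, 4 in the Leech lattice, the transitivity of its isometry
group on each of these shells, and Conway's description of the classes modulo `2Λ`: every class
contains a vector of type at most 4, and a class containing a vector of type 4 contains 48 of
them. -/
structure ShortVectors (hB : IsLeech B) : Prop where
  card_shell_two : (hB.shell 2).card = 196560
  card_shell_three : (hB.shell 3).card = 16773120
  card_shell_four : (hB.shell 4).card = 398034000
  exists_smul_eq : ∀ {u v : LV}, vtype B u ≤ 4 → vtype B u = vtype B v →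
    ∃ g : isometryGroup B, g • u = v
  exists_modTwo_eq : ∀ v, ∃ s, modTwo s = modTwo v ∧ vtype B s ≤ 4
  card_classShell_four : ∀ {f : LV}, vtype B f = 4 → (hB.classShell 4 f).card = 48

namespace OrbitData

variable {O : Set LV} {x c : ℕ}

lemma subset_shell (hO : OrbitData B O x c) (hB : IsLeech B) : O ⊆ hB.shell x :=
  fun _ hv => IsLeech.mem_shell.mpr (hO.vtype_eq hv)

lemma le_card_shell (hO : OrbitData B O x c) (hB : IsLeech B) : c ≤ (hB.shell x).card := by
  rw [← hO.2.2, ← Set.ncard_coe_finset]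
  exact Set.ncard_le_ncard (hO.subset_shell hB) (Finset.finite_toSet _)

lemma eq_coe_of_subset (hO : OrbitData B O x c) {X : Finset LV} (hsub : O ⊆ X)
    (hcard : X.card ≤ c) : O = X := by
  refine Set.eq_of_subset_of_ncard_le hsub ?_ (Finset.finite_toSet _)
  rw [Set.ncard_coe_finset]
  exact hcard.trans hO.2.2.ge

lemma eq_shell (hO : OrbitData B O x c) (hB : IsLeech B) (hcard : (hB.shell x).card ≤ c) :
    O = hB.shell x :=
  hO.eq_coe_of_subset (hO.subset_shell hB) hcard

lemma exists_smul_eq_of_vtype_eq (hO : OrbitData B O x c) (hB : IsLeech B)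
    (hcard : (hB.shell x).card ≤ c) {u v : LV} (hu : vtype B u = x) (hv : vtype B v = x) :
    ∃ g : isometryGroup B, g • u = v := by
  have hmem {w : LV} (hw : vtype B w = x) : w ∈ O := by
    rw [hO.eq_shell hB hcard]
    exact IsLeech.mem_shell.mpr hw
  exact hO.exists_smul_eq hB (hmem hu) (hmem hv)

end OrbitData

/-- The class count `1 + |O₂|/2 + |O₃|/2 + |O₄|/48 = 2 ^ 24` leaves no room for further vectors of
type at most 4. -/
theorem ShortVectors.of_orbitData {hB : IsLeech B} {O2 O3 O4 : Set LV}
    (h2 : OrbitData B O2 2 196560) (h3 : OrbitData B O3 3 16773120)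
    (h4 : OrbitData B O4 4 398034000) : ShortVectors hB := by
  have le2 : 196560 ≤ (hB.shell 2).card := h2.le_card_shell hB
  have le3 : 16773120 ≤ (hB.shell 3).card := h3.le_card_shell hB
  have le4 : 398034000 ≤ (hB.shell 4).card := h4.le_card_shell hB
  have ge2 := hB.card_shell_le_mul_card_classes (hB.card_classShell_le_two (k := 2) (by norm_num))
  have ge3 := hB.card_shell_le_mul_card_classes (hB.card_classShell_le_two (k := 3) (by norm_num))
  have ge4 := hB.card_shell_le_mul_card_classes hB.card_classShell_four_le
  have count := hB.card_shortClasses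
  have bound := hB.card_shortClasses_le
  have eq2 : (hB.shell 2).card = 196560 := by omega
  have eq3 : (hB.shell 3).card = 16773120 := by omega
  have eq4 : (hB.shell 4).card = 398034000 := by omega
  refine ⟨eq2, eq3, eq4, fun {u v} hu huv => ?_, hB.exists_vtype_le_four (by omega),
    hB.card_classShell_four_eq (by omega)⟩
  rcases eq_or_ne u 0 with rfl | hu0
  · rw [vtype_zero] at huv
    exact ⟨1, by rw [smul_zero, hB.eq_zero_of_vtype_lt_two (v := v) (by omega)]⟩
  have hge := hB.two_le_vtype hu0
  obtain h | h | h : vtype B u = 2 ∨ vtype B u = 3 ∨ vtype B u = 4 := by omega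
  · exact h2.exists_smul_eq_of_vtype_eq hB eq2.le h (huv ▸ h)
  · exact h3.exists_smul_eq_of_vtype_eq hB eq3.le h (huv ▸ h)
  · exact h4.exists_smul_eq_of_vtype_eq hB eq4.le h (huv ▸ h)

end ShortVectors

section InnerCount

/-- The number of vectors in `S` having inner product `j` with `v`. -/
def innerCount (B : Matrix (Fin 24) (Fin 24) ℤ) (S : Finset LV) (j : ℤ) (v : LV) : ℕ :=
  {s ∈ S | pairZ B s v = j}.card

variable {S X Y : Finset LV} {j : ℤ} {v w : LV}

lemma innerCount_eq_zero_iff : innerCount B S j v = 0 ↔ ∀ s ∈ S, pairZ B s v ≠ j := by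
  rw [innerCount, Finset.card_eq_zero, Finset.filter_eq_empty_iff]

lemma innerCount_neg (hS : ∀ s ∈ S, -s ∈ S) (j : ℤ) (v : LV) :
    innerCount B S (-j) v = innerCount B S j v := by
  refine Finset.card_nbij' (- ·) (- ·) ?_ ?_ (fun _ _ => neg_neg _) (fun _ _ => neg_neg _) <;>
  · intro s hs
    simp only [Finset.coe_filter, Set.mem_ofPred_eq] at hs ⊢
    exact ⟨hS s hs.1, by simp [pairZ_neg_left, hs.2]⟩

lemma sum_pairZ_eq_sum_innerCount (hS : ∀ s ∈ S, -s ∈ S) {J : Finset ℕ}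
    (hJ : ∀ s ∈ S, (pairZ B s v).natAbs ∈ J) (F : ℤ → ℤ) (hF : ∀ j, F (-j) = F j) :
    ∑ s ∈ S, F (pairZ B s v) =
      ∑ j ∈ J, (if j = 0 then 1 else 2) * F j * innerCount B S j v := by
  rw [← Finset.sum_fiberwise_of_maps_to hJ]
  refine Finset.sum_congr rfl fun j _ => ?_
  have hconst : ∀ s ∈ {s ∈ S | (pairZ B s v).natAbs = j}, F (pairZ B s v) = F j := fun s hs => by
    rcases Int.natAbs_eq_iff.mp (Finset.mem_filter.mp hs).2 with h | h <;> simp [h, hF]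
  have hfiber : {s ∈ S | (pairZ B s v).natAbs = j} =
      {s ∈ S | pairZ B s v = j} ∪ {s ∈ S | pairZ B s v = -j} := by
    rw [← Finset.filter_or]
    exact Finset.filter_congr fun s _ => Int.natAbs_eq_iff
  rw [Finset.sum_congr rfl hconst, Finset.sum_const, nsmul_eq_mul, mul_comm, mul_right_comm, hfiber]
  split_ifs with h0
  · simp [h0, innerCount, mul_comm]
  · have hdisj : Disjoint {s ∈ S | pairZ B s v = j} {s ∈ S | pairZ B s v = -j} :=
      Finset.disjoint_filter.mpr fun s _ h h' => by omega
    have hneg := innerCount_neg (B := B) hS j v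
    rw [innerCount, innerCount] at hneg
    rw [Finset.card_union_of_disjoint hdisj, hneg, ← two_mul, innerCount, mul_comm]
    push_cast
    ring

lemma card_eq_sum_innerCount (hS : ∀ s ∈ S, -s ∈ S) {J : Finset ℕ}
    (hJ : ∀ s ∈ S, (pairZ B s v).natAbs ∈ J) :
    (S.card : ℤ) = ∑ j ∈ J, (if j = 0 then 1 else 2) * (innerCount B S j v : ℤ) := by
  simpa using sum_pairZ_eq_sum_innerCount hS hJ (fun _ => 1) fun _ => rfl

lemma sum_sq_eq_sum_innerCount (hS : ∀ s ∈ S, -s ∈ S) {J : Finset ℕ}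
    (hJ : ∀ s ∈ S, (pairZ B s v).natAbs ∈ J) :
    ∑ s ∈ S, pairZ B s v ^ 2 =
      ∑ j ∈ J, (if j = 0 then 1 else 2) * (j : ℤ) ^ 2 * innerCount B S j v :=
  sum_pairZ_eq_sum_innerCount hS hJ (· ^ 2) neg_sq

namespace IsLeech

lemma innerCount_smul (hB : IsLeech B) (g : isometryGroup B) (k j : ℤ) (v : LV) :
    innerCount B (hB.shell k) j (g • v) = innerCount B (hB.shell k) j v := by
  refine Finset.card_nbij' (g⁻¹ • ·) (g • ·) (fun s hs => ?_) (fun s hs => ?_)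
    (fun s _ => smul_inv_smul g s) (fun s _ => inv_smul_smul g s)
  · simp only [Finset.coe_filter, mem_shell, Set.mem_ofPred_eq] at hs ⊢
    rwa [vtype_smul, ← pairZ_smul_smul g, smul_inv_smul]
  · simp only [Finset.coe_filter, mem_shell, Set.mem_ofPred_eq] at hs ⊢
    rwa [vtype_smul, pairZ_smul_smul]

/-- The bijection is `a ↦ w - a`. -/
lemma innerCount_shell_reflect (hB : IsLeech B) {k k' j j' : ℤ} (hk : k' = k + vtype B w - j)
    (hj : j' = 2 * vtype B w - j) :
    innerCount B (hB.shell k) j w = innerCount B (hB.shell k') j' w := by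
  refine Finset.card_nbij' (w - ·) (w - ·) ?_ ?_ (fun _ _ => sub_sub_cancel _ _)
    (fun _ _ => sub_sub_cancel _ _) <;>
  · intro a ha
    simp only [Finset.coe_filter, mem_shell, Set.mem_ofPred_eq] at ha ⊢
    rw [hB.vtype_sub, hB.pairZ_comm, pairZ_sub_left, hB.pairZ_self]
    omega

/-- The bijection is `a ↦ 2a - w`. -/
lemma innerCount_shell_eq_classShell (hB : IsLeech B) {k k' j j' : ℤ}
    (hk : k' = 4 * k + vtype B w - 2 * j) (hj : j' = 2 * j - 2 * vtype B w) :
    innerCount B (hB.shell k) j w = innerCount B (hB.classShell k' w) j' w := by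
  refine Finset.card_bij (fun a _ => (2 : ℤ) • a - w) (fun a ha => ?_) (fun a _ b _ h => ?_)
    (fun s hs => ?_)
  · simp only [Finset.mem_filter, mem_shell, mem_classShell] at ha ⊢
    have hclass : modTwo ((2 : ℤ) • a - w) = modTwo w := by
      rw [map_sub, modTwo_two_smul, zero_sub, ← map_neg, modTwo_neg]
    rw [hB.vtype_sub, hB.vtype_two_smul, pairZ_sub_left, pairZ_smul_left, hB.pairZ_self]
    exact ⟨⟨by omega, hclass⟩, by omega⟩
  · exact smul_right_injective LV (two_ne_zero (α := ℤ)) (sub_left_injective h)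
  · simp only [Finset.mem_filter, mem_classShell] at hs
    obtain ⟨a, b, rfl, rfl, ha, hb⟩ := hB.exists_half_add_sub hs.1.2
    refine ⟨a, ?_, by rw [two_smul]; abel⟩
    rw [pairZ_sub_left, pairZ_add_right, pairZ_add_right, hB.pairZ_self, hB.pairZ_self,
      hB.pairZ_comm b] at hs
    simp only [Finset.mem_filter, mem_shell, pairZ_add_right, hB.pairZ_self]
    rw [hB.vtype_add, hB.vtype_sub] at *
    omega

lemma sum_innerCount_comm (hB : IsLeech B) (X Y : Finset LV) (j : ℤ) :
    ∑ w ∈ X, innerCount B Y j w = ∑ a ∈ Y, innerCount B X j a := by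
  simp only [innerCount, hB.pairZ_comm _, Finset.card_filter]
  rw [Finset.sum_comm]
  simp only [hB.pairZ_comm]

lemma card_mul_eq_card_mul (hB : IsLeech B) {m n : ℕ} (hX : ∀ w ∈ X, innerCount B Y j w = m)
    (hY : ∀ a ∈ Y, innerCount B X j a = n) : X.card * m = Y.card * n := by
  rw [← Finset.sum_const_nat hX, hB.sum_innerCount_comm, Finset.sum_const_nat hY]

lemma card_mul_le_card_mul (hB : IsLeech B) {m n : ℕ} (hX : ∀ w ∈ X, m ≤ innerCount B Y j w)
    (hY : ∀ a ∈ Y, innerCount B X j a ≤ n) : X.card * m ≤ Y.card * n := by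
  calc X.card * m ≤ ∑ w ∈ X, innerCount B Y j w := Finset.card_nsmul_le_sum _ _ _ hX
    _ = ∑ a ∈ Y, innerCount B X j a := hB.sum_innerCount_comm X Y j
    _ ≤ Y.card * n := Finset.sum_le_card_nsmul _ _ _ hY

end IsLeech

end InnerCount

section SecondMoment

namespace IsLeech

/-- The second moment form `(u, v) ↦ ∑ (u, a)(a, v)` over the vectors `a` of type `k`. -/
def secondMoment (hB : IsLeech B) (k : ℤ) (u v : LV) : ℤ :=
  ∑ a ∈ hB.shell k, pairZ B u a * pairZ B a v

variable {k : ℤ}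

lemma exists_vtype_eq (hB : IsLeech B) (hk : 0 < (hB.shell k).card) : ∃ v, vtype B v = k :=
  (Finset.card_pos.mp hk).imp fun _ => mem_shell.mp

lemma secondMoment_smul_smul (hB : IsLeech B) (g : isometryGroup B) (u v : LV) :
    hB.secondMoment k (g • u) (g • v) = hB.secondMoment k u v := by
  refine Finset.sum_nbij' (g⁻¹ • ·) (g • ·) ?_ ?_ (fun a _ => smul_inv_smul g a)
    (fun a _ => inv_smul_smul g a) fun a _ => ?_
  · simp [vtype_smul]
  · simp [vtype_smul]
  · rw [← pairZ_smul_smul g u, ← pairZ_smul_smul g _ v, smul_inv_smul]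

lemma secondMoment_add_sub (hB : IsLeech B) (a b : LV) :
    hB.secondMoment k (a + b) (a - b) = hB.secondMoment k a a - hB.secondMoment k b b := by
  simp only [secondMoment, ← Finset.sum_sub_distrib, pairZ_add_left, pairZ_sub_right]
  refine Finset.sum_congr rfl fun x _ => ?_
  rw [hB.pairZ_comm x a, hB.pairZ_comm x b]
  ring

end IsLeech

namespace ShortVectors

variable {hB : IsLeech B} {k : ℤ} {f g : LV}

lemma secondMoment_self_eq (h : ShortVectors hB) {u v : LV} (hu : vtype B u ≤ 4)
    (huv : vtype B u = vtype B v) : hB.secondMoment k u u = hB.secondMoment k v v := by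
  obtain ⟨e, rfl⟩ := h.exists_smul_eq hu huv
  rw [hB.secondMoment_smul_smul]

lemma secondMoment_eq_zero (h : ShortVectors hB) (hf : vtype B f = 4) (hg : vtype B g = 4)
    (hfg : modTwo g = modTwo f) (horth : pairZ B g f = 0) : hB.secondMoment k f g = 0 := by
  obtain ⟨a, b, rfl, rfl, ha, hb⟩ := hB.exists_half_add_sub hfg
  rw [hB.secondMoment_add_sub, h.secondMoment_self_eq (v := b) (by omega) (by omega), sub_self]

lemma sum_classShell_four (h : ShortVectors hB) (hf : vtype B f = 4) (u v : LV) :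
    ∑ g ∈ hB.classShell 4 f, pairZ B u g * pairZ B g v = 16 * pairZ B u v :=
  hB.sum_classShell_four (h.card_classShell_four hf) u v

lemma secondMoment_self (h : ShortVectors hB) (hf : vtype B f = 4) :
    3 * hB.secondMoment k f f = 2 * (k * (hB.shell k).card) := by
  have htrace : ∑ g ∈ hB.classShell 4 f, hB.secondMoment k g g = 48 * hB.secondMoment k f f := by
    rw [Finset.sum_congr rfl fun g hg => h.secondMoment_self_eq (v := f)
      (IsLeech.mem_classShell.mp hg).1.le ((IsLeech.mem_classShell.mp hg).1.trans hf.symm),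
      Finset.sum_const, h.card_classShell_four hf, nsmul_eq_mul]
    rfl
  have hswap : ∑ g ∈ hB.classShell 4 f, hB.secondMoment k g g = 32 * (k * (hB.shell k).card) := by
    simp only [IsLeech.secondMoment]
    rw [Finset.sum_comm]
    have hterm : ∀ a ∈ hB.shell k,
        ∑ g ∈ hB.classShell 4 f, pairZ B g a * pairZ B a g = 32 * k := fun a ha => by
      simp only [mul_comm (pairZ B _ a), h.sum_classShell_four hf, hB.pairZ_self,
        IsLeech.mem_shell.mp ha]
      ring
    rw [Finset.sum_congr rfl hterm, Finset.sum_const, nsmul_eq_mul]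
    ring
  linarith

/-- Expand `v` in the frame of `f`: only `±f` contribute. -/
lemma secondMoment_frame (h : ShortVectors hB) (hf : vtype B f = 4) (v : LV) :
    8 * hB.secondMoment k f v = hB.secondMoment k f f * pairZ B f v := by
  have hexpand : 16 * hB.secondMoment k f v =
      ∑ g ∈ hB.classShell 4 f, hB.secondMoment k f g * pairZ B g v := by
    simp only [IsLeech.secondMoment, Finset.sum_mul]
    rw [Finset.sum_comm, Finset.mul_sum]
    refine Finset.sum_congr rfl fun a _ => ?_
    simp only [mul_assoc, ← Finset.mul_sum, h.sum_classShell_four hf]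
    ring
  have hne : f ≠ -f := by
    intro hneg
    have := congrArg (pairZ B f) hneg
    rw [pairZ_neg_right, hB.pairZ_self] at this
    omega
  have hsub : {f, -f} ⊆ hB.classShell 4 f := by
    simp [Finset.insert_subset_iff, hf, vtype_neg, modTwo_neg]
  rw [← Finset.sum_subset hsub fun g hg hg' => ?_, Finset.sum_pair hne] at hexpand
  · have hneg : hB.secondMoment k f (-f) = -hB.secondMoment k f f := by
      simp [IsLeech.secondMoment, pairZ_neg_right]
    rw [hneg, pairZ_neg_left] at hexpand
    linarith
  · simp only [Finset.mem_insert, Finset.mem_singleton, not_or] at hg'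
    rw [IsLeech.mem_classShell] at hg
    rcases hB.eq_or_eq_neg_or_orthogonal hg.2 hg.1.le hf.le with heq | heq | ⟨-, -, horth⟩
    · exact absurd heq hg'.1
    · exact absurd heq hg'.2
    · rw [h.secondMoment_eq_zero hf hg.1 hg.2 horth, zero_mul]

lemma exists_vtype_eq_two (h : ShortVectors hB) : ∃ a, vtype B a = 2 :=
  hB.exists_vtype_eq (by simp [h.card_shell_two])

lemma exists_vtype_eq_three (h : ShortVectors hB) : ∃ t, vtype B t = 3 :=
  hB.exists_vtype_eq (by simp [h.card_shell_three])

lemma exists_vtype_eq_four (h : ShortVectors hB) : ∃ f, vtype B f = 4 :=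
  hB.exists_vtype_eq (by simp [h.card_shell_four])

theorem secondMoment_eq (h : ShortVectors hB) (k : ℤ) (u v : LV) :
    12 * hB.secondMoment k u v = k * (hB.shell k).card * pairZ B u v := by
  obtain ⟨f, hf⟩ := h.exists_vtype_eq_four
  have hexpand : 16 * hB.secondMoment k u v =
      ∑ g ∈ hB.classShell 4 f, pairZ B u g * hB.secondMoment k g v := by
    simp only [IsLeech.secondMoment, Finset.mul_sum, ← mul_assoc]
    rw [Finset.sum_comm]
    refine Finset.sum_congr rfl fun a _ => ?_
    rw [← Finset.sum_mul, h.sum_classShell_four hf]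
  have hterm : ∀ g ∈ hB.classShell 4 f, 12 * (pairZ B u g * hB.secondMoment k g v) =
      k * (hB.shell k).card * (pairZ B u g * pairZ B g v) := fun g hg => by
    have hg' := (IsLeech.mem_classShell.mp hg).1
    have hframe := h.secondMoment_frame (k := k) hg' v
    have hself := h.secondMoment_self (k := k) hg'
    have hdouble : 2 * (12 * hB.secondMoment k g v) =
        2 * (k * (hB.shell k).card * pairZ B g v) := by
      linear_combination 3 * hframe + pairZ B g v * hself
    linear_combination pairZ B u g * mul_left_cancel₀ two_ne_zero hdouble
  have hsum := Finset.sum_congr rfl hterm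
  rw [← Finset.mul_sum, ← Finset.mul_sum, ← hexpand, h.sum_classShell_four hf] at hsum
  linarith

theorem sum_sq_shell (h : ShortVectors hB) (k : ℤ) (v : LV) :
    6 * ∑ a ∈ hB.shell k, pairZ B a v ^ 2 = k * (hB.shell k).card * vtype B v := by
  have hmoment := h.secondMoment_eq k v v
  simp only [IsLeech.secondMoment, hB.pairZ_comm v, ← sq, hB.pairZ_self] at hmoment
  linarith

end ShortVectors

end SecondMoment

section Classes

namespace IsLeech

variable {k : ℤ} {s w a : LV}

lemma exists_half_types_of_vtype_ne (hB : IsLeech B) (h : modTwo s = modTwo w)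
    (hne : vtype B s ≠ vtype B w) :
    ∃ α β : ℤ, 2 ≤ α ∧ 2 ≤ β ∧ 4 * α = vtype B s + vtype B w + pairZ B s w ∧
      4 * β = vtype B s + vtype B w - pairZ B s w :=
  hB.exists_half_types h (fun heq => hne (heq ▸ rfl)) fun heq => hne (heq ▸ vtype_neg w)

lemma natAbs_pairZ_le_of_vtype_ne (hB : IsLeech B) (hne : vtype B s ≠ vtype B w) :
    ((pairZ B s w).natAbs : ℤ) ≤ vtype B s + vtype B w - 2 := by
  have := hB.pairZ_le fun heq : s = w => hne (heq ▸ rfl)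
  have := hB.neg_pairZ_le fun heq : s = -w => hne (heq ▸ vtype_neg w)
  omega

lemma modTwo_mem_classes_zero_iff (hB : IsLeech B) :
    modTwo w ∈ hB.classes 0 ↔ ∃ u, w = (2 : ℤ) • u := by
  rw [← modTwo_eq_zero_iff, mem_classes]
  constructor
  · rintro ⟨v, hv, hvw⟩
    rw [← hvw, hB.eq_zero_of_vtype_lt_two (v := v) (by omega), map_zero]
  · exact fun h => ⟨0, vtype_zero, h ▸ map_zero _⟩

lemma innerCount_classShell_eq_zero (hB : IsLeech B) {i : ℤ} (hw : modTwo w ∈ hB.classes i)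
    (hi : i ≤ 4) (hk : k ≤ 4) (hne : k ≠ i) (j : ℤ) :
    innerCount B (hB.classShell k w) j a = 0 := by
  refine innerCount_eq_zero_iff.mpr fun s hs => absurd hw ?_
  exact Finset.disjoint_left.mp (hB.disjoint_classes hk hi hne)
    (mem_classes.mpr ⟨s, mem_classShell.mp hs⟩)

lemma classShell_eq_pair (hB : IsLeech B) (hs : s ∈ hB.classShell k w) (hk : k < 4) :
    hB.classShell k w = {s, -s} := by
  refine Finset.Subset.antisymm (fun t ht => ?_) <|
    Finset.insert_subset hs (Finset.singleton_subset_iff.mpr (neg_mem_classShell s hs))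
  simp only [mem_classShell, Finset.mem_insert, Finset.mem_singleton] at hs ht ⊢
  rcases hB.eq_or_eq_neg_or_orthogonal (ht.2.trans hs.2.symm) (by omega) (by omega) with
    h | h | ⟨h, -⟩
  · exact .inl h
  · exact .inr h
  · omega

lemma ne_neg_of_mem_classShell {hB : IsLeech B} (hs : s ∈ hB.classShell k w) (h0 : k ≠ 0) :
    s ≠ -s := by
  intro h
  obtain rfl := self_eq_neg.mp h
  exact h0 ((mem_classShell.mp hs).1.symm.trans vtype_zero)

lemma card_classShell_of_mem (hB : IsLeech B) (hs : s ∈ hB.classShell k w) (h0 : k ≠ 0)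
    (hk : k < 4) : (hB.classShell k w).card = 2 := by
  rw [hB.classShell_eq_pair hs hk, Finset.card_pair (ne_neg_of_mem_classShell hs h0)]

lemma innerCount_classShell_of_mem (hB : IsLeech B) (hs : s ∈ hB.classShell k w) (h0 : k ≠ 0)
    (hk : k < 4) (j : ℤ) : innerCount B (hB.classShell k w) j a =
      (if pairZ B s a = j then 1 else 0) + (if pairZ B s a = -j then 1 else 0) := by
  rw [innerCount, hB.classShell_eq_pair hs hk, Finset.card_filter,
    Finset.sum_pair (ne_neg_of_mem_classShell hs h0), pairZ_neg_left]
  simp only [neg_eq_iff_eq_neg]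

/-- Both sides count the congruent pairs of vectors of type `k` with inner products `i`, `j`. -/
lemma innerCount_mul_eq_of_classShell (hB : IsLeech B) {i j : ℤ} {m n : ℕ}
    (hm : ∀ s, vtype B s = k → pairZ B s a = i → innerCount B (hB.classShell k s) j a = m)
    (hn : ∀ s, vtype B s = k → pairZ B s a = j → innerCount B (hB.classShell k s) i a = n) :
    innerCount B (hB.shell k) i a * m = innerCount B (hB.shell k) j a * n := by
  refine Finset.card_mul_eq_card_mul (fun s t => modTwo s = modTwo t) (fun s hs => ?_)
    fun t ht => ?_
  · simp only [Finset.mem_filter, mem_shell] at hs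
    rw [← hm s hs.1 hs.2, innerCount, classShell, Finset.filter_filter,
      Finset.bipartiteAbove, Finset.filter_filter]
    exact congrArg _ (Finset.filter_congr fun t _ => by rw [and_comm, eq_comm])
  · simp only [Finset.mem_filter, mem_shell] at ht
    rw [← hn t ht.1 ht.2, innerCount, classShell, Finset.filter_filter,
      Finset.bipartiteBelow, Finset.filter_filter]
    exact congrArg _ (Finset.filter_congr fun s _ => and_comm)

end IsLeech

namespace ShortVectors

variable {hB : IsLeech B} {w a : LV}

lemma modTwo_mem_classes_of_even (h : ShortVectors hB) (hw : vtype B w % 2 = 0) :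
    modTwo w ∈ hB.classes 0 ∨ modTwo w ∈ hB.classes 2 ∨ modTwo w ∈ hB.classes 4 := by
  obtain ⟨s, hsw, hs⟩ := h.exists_modTwo_eq w
  have hmem : modTwo w ∈ hB.classes (vtype B s) := IsLeech.mem_classes.mpr ⟨s, rfl, hsw⟩
  have hpar := hB.vtype_emod_two hsw
  have hnonneg := hB.vtype_nonneg s
  obtain h0 | h2 | h4 : vtype B s = 0 ∨ vtype B s = 2 ∨ vtype B s = 4 := by omega
  · exact .inl (h0 ▸ hmem)
  · exact .inr (.inl (h2 ▸ hmem))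
  · exact .inr (.inr (h4 ▸ hmem))

lemma exists_mem_classShell_three (h : ShortVectors hB) (hw : vtype B w % 2 = 1) :
    ∃ s, s ∈ hB.classShell 3 w := by
  obtain ⟨s, hsw, hs⟩ := h.exists_modTwo_eq w
  have hpar := hB.vtype_emod_two hsw
  have hne : s ≠ 0 := by
    rintro rfl
    rw [vtype_zero] at hpar
    omega
  have hge := hB.two_le_vtype hne
  exact ⟨s, IsLeech.mem_classShell.mpr ⟨by omega, hsw⟩⟩

lemma frame_moments (h : ShortVectors hB) (hw : modTwo w ∈ hB.classes 4) {J : Finset ℕ}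
    (hJ : ∀ s ∈ hB.classShell 4 w, (pairZ B s a).natAbs ∈ J) :
    ∑ j ∈ J, (if j = 0 then 1 else 2) * (innerCount B (hB.classShell 4 w) j a : ℤ) = 48 ∧
    ∑ j ∈ J, (if j = 0 then 1 else 2) * (j : ℤ) ^ 2 * innerCount B (hB.classShell 4 w) j a =
      32 * vtype B a := by
  obtain ⟨f, hf, hfw⟩ := IsLeech.mem_classes.mp hw
  rw [← card_eq_sum_innerCount IsLeech.neg_mem_classShell hJ,
    ← sum_sq_eq_sum_innerCount IsLeech.neg_mem_classShell hJ]
  rw [← hB.classShell_congr 4 hfw, h.card_classShell_four hf]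
  refine ⟨rfl, ?_⟩
  have hsum := h.sum_classShell_four hf a a
  simp only [hB.pairZ_comm a, ← sq, hB.pairZ_self] at hsum
  linarith

lemma shell_moments (h : ShortVectors hB) {k : ℤ} {J : Finset ℕ}
    (hJ : ∀ s ∈ hB.shell k, (pairZ B s a).natAbs ∈ J) :
    ∑ j ∈ J, (if j = 0 then 1 else 2) * (innerCount B (hB.shell k) j a : ℤ) =
      (hB.shell k).card ∧
    6 * ∑ j ∈ J, (if j = 0 then 1 else 2) * (j : ℤ) ^ 2 * innerCount B (hB.shell k) j a =
      k * (hB.shell k).card * vtype B a := by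
  rw [← card_eq_sum_innerCount IsLeech.neg_mem_shell hJ,
    ← sum_sq_eq_sum_innerCount IsLeech.neg_mem_shell hJ]
  exact ⟨rfl, h.sum_sq_shell k a⟩

lemma innerCount_shell_congr (h : ShortVectors hB) {u v : LV} (hu : vtype B u ≤ 4)
    (huv : vtype B u = vtype B v) (k j : ℤ) :
    innerCount B (hB.shell k) j u = innerCount B (hB.shell k) j v := by
  obtain ⟨g, rfl⟩ := h.exists_smul_eq hu huv
  exact (hB.innerCount_smul g k j u).symm

lemma card_filter_mul_add_card_filter_mul (h : ShortVectors hB) {x k j : ℤ} {m n : ℕ}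
    {P : LV → Prop} [DecidablePred P]
    (hm : ∀ w, vtype B w = x → P w → innerCount B (hB.shell k) j w = m)
    (hn : ∀ w, vtype B w = x → ¬ P w → innerCount B (hB.shell k) j w = n)
    (ha : vtype B a = k) (hk : k ≤ 4) :
    {w ∈ hB.shell x | P w}.card * m + {w ∈ hB.shell x | ¬ P w}.card * n =
      (hB.shell k).card * innerCount B (hB.shell x) j a := by
  have hshell : ∀ b ∈ hB.shell k, innerCount B (hB.shell x) j b = innerCount B (hB.shell x) j a :=
    fun b hb => by
      rw [IsLeech.mem_shell] at hb
      exact h.innerCount_shell_congr (by omega) (by omega) x j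
  rw [← Finset.sum_const_nat hshell, ← hB.sum_innerCount_comm,
    ← Finset.sum_filter_add_sum_filter_not _ P, Finset.sum_const_nat fun w hw => ?_,
    Finset.sum_const_nat fun w hw => ?_]
  · simp only [Finset.mem_filter, IsLeech.mem_shell] at hw
    exact hn w hw.1 hw.2
  · simp only [Finset.mem_filter, IsLeech.mem_shell] at hw
    exact hm w hw.1 hw.2

lemma card_filter_mul_eq (h : ShortVectors hB) {x k j : ℤ} {m : ℕ} {P : LV → Prop}
    [DecidablePred P] (hm : ∀ w, vtype B w = x → P w → innerCount B (hB.shell k) j w = m)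
    (h0 : ∀ w, vtype B w = x → ¬ P w → innerCount B (hB.shell k) j w = 0)
    (ha : vtype B a = k) (hk : k ≤ 4) :
    {w ∈ hB.shell x | P w}.card * m = (hB.shell k).card * innerCount B (hB.shell x) j a :=
  h.card_filter_mul_add_card_filter_mul hm h0 ha hk

lemma card_filter_mul_le (h : ShortVectors hB) {x k j : ℤ} {m : ℕ} {P : LV → Prop}
    [DecidablePred P] (hm : ∀ w, vtype B w = x → P w → m ≤ innerCount B (hB.shell k) j w)
    (ha : vtype B a = k) (hk : k ≤ 4) :
    {w ∈ hB.shell x | P w}.card * m ≤ (hB.shell k).card * innerCount B (hB.shell x) j a := by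
  refine hB.card_mul_le_card_mul (j := j) (fun w hw => ?_) fun b hb => ?_
  · simp only [Finset.mem_filter, IsLeech.mem_shell] at hw
    exact hm w hw.1 hw.2
  · rw [IsLeech.mem_shell] at hb
    rw [← h.innerCount_shell_congr (u := b) (by omega) (by omega) x j]
    exact Finset.card_le_card (Finset.filter_subset_filter _ (Finset.filter_subset _ _))

lemma card_shell_mul_eq (h : ShortVectors hB) {x k j : ℤ} {m : ℕ}
    (hm : ∀ w, vtype B w = x → innerCount B (hB.shell k) j w = m) (ha : vtype B a = k)
    (hk : k ≤ 4) :
    (hB.shell x).card * m = (hB.shell k).card * innerCount B (hB.shell x) j a := by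
  simpa using h.card_filter_mul_eq (P := fun _ => True) (fun w hw _ => hm w hw)
    (fun _ _ hP => absurd trivial hP) ha hk

lemma card_shell_mul_innerCount (h : ShortVectors hB) {x k : ℤ} (hw : vtype B w = x) (hx : x ≤ 4)
    (ha : vtype B a = k) (hk : k ≤ 4) (j : ℤ) :
    (hB.shell x).card * innerCount B (hB.shell k) j w =
      (hB.shell k).card * innerCount B (hB.shell x) j a :=
  h.card_shell_mul_eq (fun v hv => h.innerCount_shell_congr (by omega) (by omega) k j) ha hk

end ShortVectors

end Classes

section CongruentShells

namespace IsLeech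

variable {k x i : ℤ} {s w : LV}

/-- The vectors of type `x` that are congruent modulo `2Λ` to a vector of type `i`. For `i ≤ 4` this
is how the orbits of equal type are told apart. -/
def congrShell (hB : IsLeech B) (x i : ℤ) : Finset LV :=
  {w ∈ hB.shell x | modTwo w ∈ hB.classes i}

lemma mem_congrShell {hB : IsLeech B} :
    w ∈ hB.congrShell x i ↔ vtype B w = x ∧ modTwo w ∈ hB.classes i := by
  simp only [congrShell, Finset.mem_filter, mem_shell]

lemma exists_mem_classShell {hB : IsLeech B} (hw : modTwo w ∈ hB.classes k) :
    ∃ s, s ∈ hB.classShell k w :=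
  (mem_classes.mp hw).imp fun _ => mem_classShell.mpr

lemma natAbs_pairZ_of_mem_classShell (hB : IsLeech B) (hs : s ∈ hB.classShell k w)
    (hne : k ≠ vtype B w) :
    (4 : ℤ) ∣ k + vtype B w - (pairZ B s w).natAbs ∧
      8 ≤ k + vtype B w - (pairZ B s w).natAbs := by
  obtain ⟨rfl, hsw⟩ := mem_classShell.mp hs
  obtain ⟨α, β, hα, hβ, hadd, hsub⟩ := hB.exists_half_types_of_vtype_ne hsw hne
  omega

lemma innerCount_classShell_zero (hB : IsLeech B) (hk : k < 4) (h0 : k ≠ 0)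
    (hs : s ∈ hB.classShell k w) (hsw : (pairZ B s w).natAbs = 0) :
    innerCount B (hB.classShell k w) 0 w = 2 := by
  rw [hB.innerCount_classShell_of_mem hs h0 hk, if_pos (by omega), if_pos (by omega)]

lemma innerCount_classShell_neg_natAbs (hB : IsLeech B) (hk : k < 4) (h0 : k ≠ 0)
    (hs : s ∈ hB.classShell k w) {j : ℕ} (hj : j ≠ 0) (hsw : (pairZ B s w).natAbs = j) :
    innerCount B (hB.classShell k w) (-j) w = 1 := by
  rw [hB.innerCount_classShell_of_mem hs h0 hk]
  rcases Int.natAbs_eq_iff.mp hsw with h | h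
  · rw [if_neg (by omega), if_pos (by omega)]
  · rw [if_pos (by omega), if_neg (by omega)]

lemma innerCount_self (hB : IsLeech B) (k : ℤ) (hk : vtype B w = k) :
    innerCount B (hB.shell k) (2 * k) w = 1 := by
  refine Finset.card_eq_one.mpr ⟨w, Finset.ext fun a => ?_⟩
  simp only [Finset.mem_filter, mem_shell, Finset.mem_singleton]
  refine ⟨fun ha => ?_, fun ha => by rw [ha, hB.pairZ_self, hk]; simp⟩
  by_contra hne
  have := hB.pairZ_le hne
  omega

lemma innerCount_two_smul (hB : IsLeech B) (k : ℤ) (hk : vtype B w = k) :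
    innerCount B (hB.shell k) (4 * k) ((2 : ℤ) • w) = 1 := by
  rw [← hB.innerCount_self k hk]
  simp only [innerCount, pairZ_smul_right]
  exact congrArg _ (Finset.filter_congr fun a _ => by omega)

lemma natAbs_pairZ_le_or_eq (hB : IsLeech B) (h : vtype B s = vtype B w) :
    ((pairZ B s w).natAbs : ℤ) ≤ 2 * vtype B w - 2 ∨
      (pairZ B s w).natAbs = 2 * vtype B w := by
  by_cases hpos : s = w
  · rw [hpos, hB.pairZ_self]
    have := hB.vtype_nonneg w
    omega
  by_cases hneg : s = -w
  · rw [hneg, pairZ_neg_left, hB.pairZ_self]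
    have := hB.vtype_nonneg w
    omega
  have := hB.pairZ_le hpos
  have := hB.neg_pairZ_le hneg
  omega

end IsLeech

/-! In the names below, `innerCount_k_j_of_x` is about the vectors of type `k` having inner product
`j` with a given vector of type `x`, and `innerCount_k_j_of_x_i` about the case in which the latter
is congruent to a vector of type `i`. -/

namespace ShortVectors

variable {hB : IsLeech B} {w a f : LV}

lemma mem_congrShell_two_or_four_of_six (h : ShortVectors hB) (hw : vtype B w = 6) :
    w ∈ hB.congrShell 6 2 ∨ w ∈ hB.congrShell 6 4 := by
  simp only [IsLeech.mem_congrShell, hw, true_and]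
  rcases h.modTwo_mem_classes_of_even (w := w) (by omega) with h0 | h24
  · obtain ⟨u, rfl⟩ := hB.modTwo_mem_classes_zero_iff.mp h0
    rw [hB.vtype_two_smul] at hw
    omega
  · exact h24

lemma natAbs_pairZ_of_six_four (hw : w ∈ hB.congrShell 6 4) :
    ∀ s ∈ hB.classShell 4 w, (pairZ B s w).natAbs = 2 := fun s hs => by
  have hw6 := (IsLeech.mem_congrShell.mp hw).1
  have := hB.natAbs_pairZ_of_mem_classShell hs (by omega)
  omega

lemma innerCount_classShell_two_of_six_four (h : ShortVectors hB) (hw : w ∈ hB.congrShell 6 4) :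
    innerCount B (hB.classShell 4 w) 2 w = 24 := by
  have hmoment : 2 * (innerCount B (hB.classShell 4 w) 2 w : ℤ) = 48 := by
    simpa using (h.frame_moments (IsLeech.mem_congrShell.mp hw).2 (J := {2})
      (by simpa using natAbs_pairZ_of_six_four hw)).1
  omega

lemma innerCount_classShell_of_eight_four (h : ShortVectors hB) (hw : w ∈ hB.congrShell 8 4) :
    innerCount B (hB.classShell 4 w) 0 w = 32 ∧ innerCount B (hB.classShell 4 w) 4 w = 8 := by
  obtain ⟨hw8, hw4⟩ := IsLeech.mem_congrShell.mp hw
  have hmoments : (innerCount B (hB.classShell 4 w) 0 w : ℤ) +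
        2 * innerCount B (hB.classShell 4 w) 4 w = 48 ∧
      32 * (innerCount B (hB.classShell 4 w) 4 w : ℤ) = 256 := by
    simpa [hw8] using h.frame_moments hw4 (a := w) (J := {0, 4}) fun s hs => by
      have := hB.natAbs_pairZ_of_mem_classShell hs (by omega)
      simp only [Finset.mem_insert, Finset.mem_singleton]
      omega
  omega

lemma innerCount_classShell_six_of_ten_four (h : ShortVectors hB) (hw : w ∈ hB.congrShell 10 4) :
    innerCount B (hB.classShell 4 w) 6 w = 2 := by
  obtain ⟨hw10, hw4⟩ := IsLeech.mem_congrShell.mp hw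
  have hmoments : 2 * (innerCount B (hB.classShell 4 w) 2 w : ℤ) +
        2 * innerCount B (hB.classShell 4 w) 6 w = 48 ∧
      8 * (innerCount B (hB.classShell 4 w) 2 w : ℤ) +
        72 * innerCount B (hB.classShell 4 w) 6 w = 320 := by
    simpa [hw10] using h.frame_moments hw4 (a := w) (J := {2, 6}) fun s hs => by
      have := hB.natAbs_pairZ_of_mem_classShell hs (by omega)
      simp only [Finset.mem_insert, Finset.mem_singleton]
      omega
  omega

lemma innerCount_two_five_of_six_four (h : ShortVectors hB) (hw : w ∈ hB.congrShell 6 4) :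
    innerCount B (hB.shell 2) 5 w = 24 := by
  have hw6 := (IsLeech.mem_congrShell.mp hw).1
  rw [hB.innerCount_shell_eq_classShell (k' := 4) (j' := -2) (by omega) (by omega),
    innerCount_neg IsLeech.neg_mem_classShell]
  exact h.innerCount_classShell_two_of_six_four hw

lemma innerCount_two_five_of_six_two (hw : w ∈ hB.congrShell 6 2) :
    innerCount B (hB.shell 2) 5 w = 0 := by
  obtain ⟨hw6, hw2⟩ := IsLeech.mem_congrShell.mp hw
  rw [hB.innerCount_shell_eq_classShell (k' := 4) (j' := -2) (by omega) (by omega)]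
  exact hB.innerCount_classShell_eq_zero hw2 (by omega) (by omega) (by omega) _

lemma innerCount_two_six_of_six_two (hw : w ∈ hB.congrShell 6 2) :
    innerCount B (hB.shell 2) 6 w = 2 := by
  obtain ⟨hw6, hw2⟩ := IsLeech.mem_congrShell.mp hw
  obtain ⟨s, hs⟩ := IsLeech.exists_mem_classShell hw2
  have := hB.natAbs_pairZ_of_mem_classShell hs (by omega)
  rw [hB.innerCount_shell_eq_classShell (k' := 2) (j' := 0) (by omega) (by omega)]
  exact hB.innerCount_classShell_zero (by omega) (by omega) hs (by omega)

lemma innerCount_two_six_of_six_four (hw : w ∈ hB.congrShell 6 4) :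
    innerCount B (hB.shell 2) 6 w = 0 := by
  obtain ⟨hw6, hw4⟩ := IsLeech.mem_congrShell.mp hw
  rw [hB.innerCount_shell_eq_classShell (k' := 2) (j' := 0) (by omega) (by omega)]
  exact hB.innerCount_classShell_eq_zero hw4 (by omega) (by omega) (by omega) _

lemma innerCount_of_eight_four (h : ShortVectors hB) (hw : w ∈ hB.congrShell 8 4) :
    innerCount B (hB.shell 2) 6 w = 8 ∧ innerCount B (hB.shell 3) 8 w = 32 := by
  have hw8 := (IsLeech.mem_congrShell.mp hw).1
  rw [hB.innerCount_shell_eq_classShell (k := 2) (k' := 4) (j' := -4) (by omega) (by omega),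
    innerCount_neg IsLeech.neg_mem_classShell,
    hB.innerCount_shell_eq_classShell (k := 3) (k' := 4) (j' := 0) (by omega) (by omega)]
  exact (h.innerCount_classShell_of_eight_four hw).symm

lemma innerCount_eq_zero_of_eight (h : ShortVectors hB) (hw : vtype B w = 8)
    (hw4 : modTwo w ∉ hB.classes 4) :
    innerCount B (hB.shell 2) 6 w = 0 ∧ innerCount B (hB.shell 3) 8 w = 0 := by
  have hzero (j : ℤ) : innerCount B (hB.classShell 4 w) j w = 0 := by
    rcases h.modTwo_mem_classes_of_even (w := w) (by omega) with h0 | h2 | h4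
    · exact hB.innerCount_classShell_eq_zero h0 (by omega) (by omega) (by omega) j
    · exact hB.innerCount_classShell_eq_zero h2 (by omega) (by omega) (by omega) j
    · exact absurd h4 hw4
  rw [hB.innerCount_shell_eq_classShell (k := 2) (k' := 4) (j' := -4) (by omega) (by omega),
    hB.innerCount_shell_eq_classShell (k := 3) (k' := 4) (j' := 0) (by omega) (by omega)]
  exact ⟨hzero _, hzero _⟩

lemma innerCount_two_eq_one_or_mem_congrShell_of_eight (h : ShortVectors hB)
    (hw : vtype B w = 8) : innerCount B (hB.shell 2) 8 w = 1 ∨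
      innerCount B (hB.shell 2) 7 w = 1 ∨ w ∈ hB.congrShell 8 4 := by
  rcases h.modTwo_mem_classes_of_even (w := w) (by omega) with h0 | h2 | h4
  · obtain ⟨u, rfl⟩ := hB.modTwo_mem_classes_zero_iff.mp h0
    rw [hB.vtype_two_smul] at hw
    exact .inl (hB.innerCount_two_smul 2 (by omega))
  · obtain ⟨s, hs⟩ := IsLeech.exists_mem_classShell h2
    have := hB.natAbs_pairZ_of_mem_classShell hs (by omega)
    rw [hB.innerCount_shell_eq_classShell (k := 2) (j := 7) (k' := 2) (j' := -(2 : ℕ)) (by omega)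
      (by norm_num [hw])]
    exact .inr (.inl (hB.innerCount_classShell_neg_natAbs (by omega) (by omega) hs (by omega)
      (by omega)))
  · exact .inr (.inr (IsLeech.mem_congrShell.mpr ⟨hw, h4⟩))

lemma innerCount_two_five_of_five (h : ShortVectors hB) (hw : vtype B w = 5) :
    innerCount B (hB.shell 2) 5 w = 2 := by
  obtain ⟨s, hs⟩ := h.exists_mem_classShell_three (w := w) (by omega)
  have := hB.natAbs_pairZ_of_mem_classShell hs (by omega)
  rw [hB.innerCount_shell_eq_classShell (k' := 3) (j' := 0) (by omega) (by omega)]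
  exact hB.innerCount_classShell_zero (by omega) (by omega) hs (by omega)

lemma innerCount_two_six_of_seven (h : ShortVectors hB) (hw : vtype B w = 7) :
    innerCount B (hB.shell 2) 6 w = 1 := by
  obtain ⟨s, hs⟩ := h.exists_mem_classShell_three (w := w) (by omega)
  have := hB.natAbs_pairZ_of_mem_classShell hs (by omega)
  rw [hB.innerCount_shell_eq_classShell (k' := 3) (j' := -(2 : ℕ)) (by omega)
    (by norm_num [hw])]
  exact hB.innerCount_classShell_neg_natAbs (by omega) (by omega) hs (by omega) (by omega)

lemma innerCount_two_four_of_four (h : ShortVectors hB) (hf : vtype B f = 4) :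
    innerCount B (hB.shell 2) 4 f = 46 := by
  rw [hB.innerCount_shell_eq_classShell (k' := 4) (j' := 0) (by omega) (by omega)]
  have hproducts : ∀ s ∈ hB.classShell 4 f, (pairZ B s f).natAbs ∈ ({0, 8} : Finset ℕ) := by
    intro s hs
    obtain ⟨hs4, hsf⟩ := IsLeech.mem_classShell.mp hs
    simp only [Finset.mem_insert, Finset.mem_singleton]
    rcases hB.eq_or_eq_neg_or_orthogonal hsf hs4.le hf.le with rfl | rfl | ⟨-, -, h0⟩
    · rw [hB.pairZ_self]
      omega
    · rw [pairZ_neg_left, hB.pairZ_self]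
      omega
    · omega
  have hmoments : (innerCount B (hB.classShell 4 f) 0 f : ℤ) +
        2 * innerCount B (hB.classShell 4 f) 8 f = 48 ∧
      128 * (innerCount B (hB.classShell 4 f) 8 f : ℤ) = 128 := by
    simpa [hf] using h.frame_moments (IsLeech.mem_classes.mpr ⟨f, hf, rfl⟩) hproducts
  omega

/-- In a frame, the inner products with a vector of type 2 are all even or all odd, and in the odd
case they are `±1` for 46 of the frame vectors and `±3` for the remaining two. -/
lemma innerCount_four_one_of_two (h : ShortVectors hB) (ha : vtype B a = 2) :
    innerCount B (hB.shell 4) 1 a = 23 * innerCount B (hB.shell 4) 3 a := by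
  have hframe (w : LV) (hw : vtype B w = 4) (hodd : pairZ B w a % 2 = 1) :
      innerCount B (hB.classShell 4 w) 1 a = 23 ∧ innerCount B (hB.classShell 4 w) 3 a = 1 := by
    have hproducts : ∀ s ∈ hB.classShell 4 w, (pairZ B s a).natAbs ∈ ({1, 3} : Finset ℕ) := by
      intro s hs
      obtain ⟨hs4, hsw⟩ := IsLeech.mem_classShell.mp hs
      have hpar := pairZ_emod_two (B := B) hsw a
      have hle := hB.natAbs_pairZ_le_of_vtype_ne (s := s) (w := a) (by omega)
      rw [hB.pairZ_comm a, hB.pairZ_comm a] at hpar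
      simp only [Finset.mem_insert, Finset.mem_singleton]
      omega
    have hmoments : 2 * (innerCount B (hB.classShell 4 w) 1 a : ℤ) +
          2 * innerCount B (hB.classShell 4 w) 3 a = 48 ∧
        2 * (innerCount B (hB.classShell 4 w) 1 a : ℤ) +
          18 * innerCount B (hB.classShell 4 w) 3 a = 64 := by
      simpa [ha] using h.frame_moments (IsLeech.mem_classes.mpr ⟨w, hw, rfl⟩) hproducts
    omega
  have hcount := hB.innerCount_mul_eq_of_classShell (k := 4) (a := a) (i := 1) (j := 3)
    (fun s hs hsa => (hframe s hs (by omega)).2) (fun s hs hsa => (hframe s hs (by omega)).1)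
  omega

lemma innerCount_six_five_of_two (ha : vtype B a = 2) :
    innerCount B (hB.shell 6) 5 a = innerCount B (hB.shell 4) 3 a := by
  rw [hB.innerCount_shell_reflect (k' := 3) (j' := -1) (by omega) (by omega),
    innerCount_neg IsLeech.neg_mem_shell,
    hB.innerCount_shell_reflect (k' := 4) (j' := 3) (by omega) (by omega)]

lemma innerCount_eight_six_of_two (ha : vtype B a = 2) :
    innerCount B (hB.shell 8) 6 a = innerCount B (hB.shell 4) 2 a := by
  rw [hB.innerCount_shell_reflect (k' := 4) (j' := -2) (by omega) (by omega),
    innerCount_neg IsLeech.neg_mem_shell]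

end ShortVectors

end CongruentShells

section MinimalCounts

variable {hB : IsLeech B} {O : Set LV} {x c : ℕ} {u v a : LV}

namespace OrbitData

lemma exists_mem (hO : OrbitData B O x c) (hB : IsLeech B) : ∃ u, u ∈ O := by
  obtain ⟨⟨r, rfl⟩, -⟩ := hO
  exact ⟨r, hB.orbitOf_eq_orbit r ▸ MulAction.mem_orbit_self r⟩

lemma card_filter_shell (hO : OrbitData B O x c) (hB : IsLeech B) [DecidablePred (· ∈ O)] :
    {w ∈ hB.shell x | w ∈ O}.card = c := by
  rw [← hO.2.2, Nat.card_coe_set_eq, ← Set.ncard_coe_finset]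
  congr 1
  ext w
  simpa using fun hw => hO.vtype_eq hw

lemma innerCount_eq (hO : OrbitData B O x c) (hB : IsLeech B) (hu : u ∈ O) (hv : v ∈ O) (k j : ℤ) :
    innerCount B (hB.shell k) j u = innerCount B (hB.shell k) j v := by
  obtain ⟨g, rfl⟩ := hO.exists_smul_eq hB hu hv
  exact (hB.innerCount_smul g k j u).symm

lemma card_mul_innerCount_le (hO : OrbitData B O x c) (h : ShortVectors hB) (hu : u ∈ O) {k : ℤ}
    (ha : vtype B a = k) (hk : k ≤ 4) (j : ℤ) :
    c * innerCount B (hB.shell k) j u ≤ (hB.shell k).card * innerCount B (hB.shell x) j a := by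
  classical
  rw [← hO.card_filter_shell hB]
  exact h.card_filter_mul_le (fun w _ hw => (hO.innerCount_eq hB hu hw k j).le) ha hk

lemma mem_congrShell_six_four (hO : OrbitData B O 6 (518400 * 65520)) (h : ShortVectors hB)
    (hu : u ∈ O) : u ∈ hB.congrShell 6 4 := by
  refine (h.mem_congrShell_two_or_four_of_six (hO.vtype_eq hu)).resolve_left fun hu2 => ?_
  obtain ⟨a, ha⟩ := h.exists_vtype_eq_two
  have hle := hO.card_mul_innerCount_le h hu ha (by norm_num) 6
  have hbound : innerCount B (hB.shell 6) 6 a ≤ 196560 := by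
    rw [hB.innerCount_shell_reflect (k' := 2) (j' := -2) (by omega) (by omega),
      ← h.card_shell_two]
    exact Finset.card_filter_le _ _
  rw [ShortVectors.innerCount_two_six_of_six_two hu2, h.card_shell_two] at hle
  push_cast at hle
  omega

lemma mem_congrShell_eight_four (hO : OrbitData B O 8 (12295800 * 65520)) (h : ShortVectors hB)
    (hu : u ∈ O) : u ∈ hB.congrShell 8 4 := by
  obtain ⟨a, ha⟩ := h.exists_vtype_eq_two
  have hbound8 : innerCount B (hB.shell 8) 8 a ≤ 196560 := by
    rw [hB.innerCount_shell_reflect (k' := 2) (j' := -4) (by omega) (by omega),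
      ← h.card_shell_two]
    exact Finset.card_filter_le _ _
  have hbound7 : innerCount B (hB.shell 8) 7 a ≤ 196560 := by
    rw [hB.innerCount_shell_reflect (k' := 3) (j' := -3) (by omega) (by omega),
      innerCount_neg IsLeech.neg_mem_shell,
      hB.innerCount_shell_reflect (k' := 2) (j' := 1) (by omega) (by omega), ← h.card_shell_two]
    exact Finset.card_filter_le _ _
  have hle8 := hO.card_mul_innerCount_le h hu ha (by norm_num) 8
  have hle7 := hO.card_mul_innerCount_le h hu ha (by norm_num) 7
  rw [h.card_shell_two] at hle7 hle8
  push_cast at hle7 hle8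
  rcases h.innerCount_two_eq_one_or_mem_congrShell_of_eight (hO.vtype_eq hu) with h8 | h7 | hu4
  · omega
  · omega
  · exact hu4

end OrbitData

/-- The short vectors of the Leech lattice together with the inner products between a vector of type
4 and the minimal vectors. -/
structure MinimalCounts (hB : IsLeech B) : Prop extends ShortVectors hB where
  innerCount_two_zero_of_four : ∀ {f : LV}, vtype B f = 4 → innerCount B (hB.shell 2) 0 f = 65780
  innerCount_two_one_of_four : ∀ {f : LV}, vtype B f = 4 → innerCount B (hB.shell 2) 1 f = 47104
  innerCount_two_two_of_four : ∀ {f : LV}, vtype B f = 4 → innerCount B (hB.shell 2) 2 f = 16192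
  innerCount_two_three_of_four : ∀ {f : LV}, vtype B f = 4 → innerCount B (hB.shell 2) 3 f = 2048

/-- The two moments and the ratio `23` leave one unknown, which the sizes of the orbits `O₆ₐ` and
`O₈ᵦ` bound from both sides. -/
theorem MinimalCounts.of_orbitData {O6a O8b : Set LV} (h : ShortVectors hB)
    (h6a : OrbitData B O6a 6 (518400 * 65520)) (h8b : OrbitData B O8b 8 (12295800 * 65520)) :
    MinimalCounts hB := by
  suffices hcounts : ∀ f, vtype B f = 4 →
      innerCount B (hB.shell 2) 0 f = 65780 ∧ innerCount B (hB.shell 2) 1 f = 47104 ∧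
        innerCount B (hB.shell 2) 2 f = 16192 ∧ innerCount B (hB.shell 2) 3 f = 2048 from
    ⟨h, fun hf => (hcounts _ hf).1, fun hf => (hcounts _ hf).2.1, fun hf => (hcounts _ hf).2.2.1,
      fun hf => (hcounts _ hf).2.2.2⟩
  intro f hf
  obtain ⟨a, ha⟩ := h.exists_vtype_eq_two
  obtain ⟨u, hu⟩ := h6a.exists_mem hB
  obtain ⟨v, hv⟩ := h8b.exists_mem hB
  have bound6 := h6a.card_mul_innerCount_le h hu ha (by norm_num) 5
  have bound8 := h8b.card_mul_innerCount_le h hv ha (by norm_num) 6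
  have ratio := h.innerCount_four_one_of_two ha
  have dual (j : ℤ) := h.card_shell_mul_innerCount hf (by norm_num) ha (by norm_num) j
  have dual1 := dual 1
  have dual2 := dual 2
  have dual3 := dual 3
  have moments : (innerCount B (hB.shell 2) 0 f : ℤ) + 2 * innerCount B (hB.shell 2) 1 f +
        2 * innerCount B (hB.shell 2) 2 f + 2 * innerCount B (hB.shell 2) 3 f +
        2 * innerCount B (hB.shell 2) 4 f = 196560 ∧
      6 * (2 * (innerCount B (hB.shell 2) 1 f : ℤ) + 8 * innerCount B (hB.shell 2) 2 f +
        18 * innerCount B (hB.shell 2) 3 f + 32 * innerCount B (hB.shell 2) 4 f) = 1572480 := by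
    simpa [Finset.sum_range_succ, hf, h.card_shell_two] using
      h.shell_moments (k := 2) (a := f) (J := Finset.range 5) fun s hs => by
        rw [IsLeech.mem_shell] at hs
        have := hB.natAbs_pairZ_le_of_vtype_ne (s := s) (w := f) (by omega)
        rw [Finset.mem_range]
        omega
  rw [h.innerCount_two_five_of_six_four (h6a.mem_congrShell_six_four h hu), h.card_shell_two,
    Nat.cast_ofNat, ShortVectors.innerCount_six_five_of_two ha] at bound6
  rw [(h.innerCount_of_eight_four (h8b.mem_congrShell_eight_four h hv)).1, h.card_shell_two,
    Nat.cast_ofNat, ShortVectors.innerCount_eight_six_of_two ha] at bound8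
  rw [h.innerCount_two_four_of_four hf] at moments
  rw [h.card_shell_two, h.card_shell_four] at dual1 dual2 dual3
  omega

end MinimalCounts

section ShortCounts

namespace MinimalCounts

variable {hB : IsLeech B} {a f t : LV}

/-- Double counting of the pairs of vectors of types 2 and 4 with given inner product. -/
lemma innerCount_four_of_two (h : MinimalCounts hB) (ha : vtype B a = 2) :
    innerCount B (hB.shell 4) 0 a = 133204500 ∧ innerCount B (hB.shell 4) 1 a = 95385600 ∧
      innerCount B (hB.shell 4) 2 a = 32788800 ∧ innerCount B (hB.shell 4) 3 a = 4147200 ∧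
      innerCount B (hB.shell 4) 4 a = 93150 := by
  obtain ⟨f, hf⟩ := h.exists_vtype_eq_four
  have dual (j : ℤ) : 398034000 * innerCount B (hB.shell 2) j f =
      196560 * innerCount B (hB.shell 4) j a := by
    rw [← h.card_shell_two, ← h.card_shell_four]
    exact h.card_shell_mul_innerCount hf (by norm_num) ha (by norm_num) j
  have dual0 := dual 0
  have dual1 := dual 1
  have dual2 := dual 2
  have dual3 := dual 3
  have dual4 := dual 4
  rw [h.innerCount_two_zero_of_four hf] at dual0
  rw [h.innerCount_two_one_of_four hf] at dual1
  rw [h.innerCount_two_two_of_four hf] at dual2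
  rw [h.innerCount_two_three_of_four hf] at dual3
  rw [h.innerCount_two_four_of_four hf] at dual4
  omega

lemma innerCount_two_of_two (h : MinimalCounts hB) (ha : vtype B a = 2) :
    innerCount B (hB.shell 2) 0 a = 93150 ∧ innerCount B (hB.shell 2) 1 a = 47104 ∧
      innerCount B (hB.shell 2) 2 a = 4600 := by
  have hself : innerCount B (hB.shell 2) 4 a = 1 := hB.innerCount_self 2 ha
  have hzero : innerCount B (hB.shell 2) 0 a = 93150 := by
    rw [hB.innerCount_shell_reflect (k' := 4) (j' := 4) (by omega) (by omega)]
    exact (h.innerCount_four_of_two ha).2.2.2.2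
  have hmoments : (innerCount B (hB.shell 2) 0 a : ℤ) + (2 * innerCount B (hB.shell 2) 1 a +
        (2 * innerCount B (hB.shell 2) 2 a + 2 * innerCount B (hB.shell 2) 4 a)) = 196560 ∧
      6 * (2 * (innerCount B (hB.shell 2) 1 a : ℤ) + (8 * innerCount B (hB.shell 2) 2 a +
        32 * innerCount B (hB.shell 2) 4 a)) = 786240 := by
    simpa [ha, h.card_shell_two] using
      h.shell_moments (k := 2) (a := a) (J := {0, 1, 2, 4}) fun s hs => by
        rw [IsLeech.mem_shell] at hs
        have := hB.natAbs_pairZ_le_or_eq (s := s) (w := a) (by omega)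
        simp only [Finset.mem_insert, Finset.mem_singleton]
        omega
  omega

lemma innerCount_three_of_two (h : MinimalCounts hB) (ha : vtype B a = 2) :
    innerCount B (hB.shell 3) 1 a = 4147200 ∧ innerCount B (hB.shell 3) 2 a = 953856 := by
  have hone : innerCount B (hB.shell 3) 1 a = 4147200 := by
    rw [hB.innerCount_shell_reflect (k' := 4) (j' := 3) (by omega) (by omega)]
    exact (h.innerCount_four_of_two ha).2.2.2.1
  have hthree : innerCount B (hB.shell 3) 3 a = 47104 := by
    rw [hB.innerCount_shell_reflect (k' := 2) (j' := 1) (by omega) (by omega)]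
    exact (h.innerCount_two_of_two ha).2.1
  have hmoment : 6 * (2 * (innerCount B (hB.shell 3) 1 a : ℤ) +
        8 * innerCount B (hB.shell 3) 2 a + 18 * innerCount B (hB.shell 3) 3 a) = 100638720 := by
    simpa [Finset.sum_range_succ, ha, h.card_shell_three] using
      (h.shell_moments (k := 3) (a := a) (J := Finset.range 4) fun s hs => by
        rw [IsLeech.mem_shell] at hs
        have := hB.natAbs_pairZ_le_of_vtype_ne (s := s) (w := a) (by omega)
        rw [Finset.mem_range]
        omega).2
  omega

lemma card_congrShell_six_four (h : MinimalCounts hB) :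
    (hB.congrShell 6 4).card = 518400 * 65520 := by
  obtain ⟨a, ha⟩ := h.exists_vtype_eq_two
  have hcount : (hB.congrShell 6 4).card * 24 = (hB.shell 2).card * innerCount B (hB.shell 6) 5 a :=
    h.card_filter_mul_eq
      (fun w hw hw4 => h.innerCount_two_five_of_six_four (IsLeech.mem_congrShell.mpr ⟨hw, hw4⟩))
      (fun w hw hw4 => ShortVectors.innerCount_two_five_of_six_two <|
        (h.mem_congrShell_two_or_four_of_six hw).resolve_right fun hmem =>
          hw4 (IsLeech.mem_congrShell.mp hmem).2) ha (by norm_num)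
  rw [h.card_shell_two, ShortVectors.innerCount_six_five_of_two ha,
    (h.innerCount_four_of_two ha).2.2.2.1] at hcount
  omega

lemma card_congrShell_six_two (h : MinimalCounts hB) :
    (hB.congrShell 6 2).card = 6900 * 65520 := by
  obtain ⟨a, ha⟩ := h.exists_vtype_eq_two
  have hcount : (hB.congrShell 6 2).card * 2 = (hB.shell 2).card * innerCount B (hB.shell 6) 6 a :=
    h.card_filter_mul_eq
      (fun w hw hw2 =>
        ShortVectors.innerCount_two_six_of_six_two (IsLeech.mem_congrShell.mpr ⟨hw, hw2⟩))
      (fun w hw hw2 => ShortVectors.innerCount_two_six_of_six_four <|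
        (h.mem_congrShell_two_or_four_of_six hw).resolve_left fun hmem =>
          hw2 (IsLeech.mem_congrShell.mp hmem).2) ha (by norm_num)
  rw [h.card_shell_two, hB.innerCount_shell_reflect (k' := 2) (j' := -2) (by omega) (by omega),
    innerCount_neg IsLeech.neg_mem_shell, (h.innerCount_two_of_two ha).2.2] at hcount
  omega

lemma card_congrShell_eight_four (h : MinimalCounts hB) :
    (hB.congrShell 8 4).card = 12295800 * 65520 := by
  obtain ⟨a, ha⟩ := h.exists_vtype_eq_two
  have hcount : (hB.congrShell 8 4).card * 8 = (hB.shell 2).card * innerCount B (hB.shell 8) 6 a :=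
    h.card_filter_mul_eq
      (fun w hw hw4 => (h.innerCount_of_eight_four (IsLeech.mem_congrShell.mpr ⟨hw, hw4⟩)).1)
      (fun w hw hw4 => (h.innerCount_eq_zero_of_eight hw hw4).1) ha (by norm_num)
  rw [h.card_shell_two, ShortVectors.innerCount_eight_six_of_two ha,
    (h.innerCount_four_of_two ha).2.2.1] at hcount
  omega

lemma card_shell_five (h : MinimalCounts hB) : (hB.shell 5).card = 70656 * 65520 := by
  obtain ⟨a, ha⟩ := h.exists_vtype_eq_two
  have hcount := h.card_shell_mul_eq (fun w hw => h.innerCount_two_five_of_five hw) ha (by norm_num)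
  rw [h.card_shell_two, hB.innerCount_shell_reflect (k' := 2) (j' := -1) (by omega) (by omega),
    innerCount_neg IsLeech.neg_mem_shell, (h.innerCount_two_of_two ha).2.1] at hcount
  omega

lemma card_shell_seven (h : MinimalCounts hB) : (hB.shell 7).card = 2861568 * 65520 := by
  obtain ⟨a, ha⟩ := h.exists_vtype_eq_two
  have hcount := h.card_shell_mul_eq (fun w hw => h.innerCount_two_six_of_seven hw) ha (by norm_num)
  rw [h.card_shell_two, hB.innerCount_shell_reflect (k' := 3) (j' := -2) (by omega) (by omega),
    innerCount_neg IsLeech.neg_mem_shell, (h.innerCount_three_of_two ha).2] at hcount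
  omega

lemma innerCount_three_two_of_three (h : MinimalCounts hB) (ht : vtype B t = 3) :
    innerCount B (hB.shell 3) 2 t = 1536975 := by
  have hcount : (hB.congrShell 8 4).card * 32 =
      (hB.shell 3).card * innerCount B (hB.shell 8) 8 t :=
    h.card_filter_mul_eq
      (fun w hw hw4 => (h.innerCount_of_eight_four (IsLeech.mem_congrShell.mpr ⟨hw, hw4⟩)).2)
      (fun w hw hw4 => (h.innerCount_eq_zero_of_eight hw hw4).2) ht (by norm_num)
  rw [h.card_congrShell_eight_four, h.card_shell_three,
    hB.innerCount_shell_reflect (k' := 3) (j' := -2) (by omega) (by omega),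
    innerCount_neg IsLeech.neg_mem_shell] at hcount
  omega

lemma innerCount_three_four_of_four (h : MinimalCounts hB) (hf : vtype B f = 4) :
    innerCount B (hB.shell 3) 4 f = 64768 := by
  obtain ⟨t, ht⟩ := h.exists_vtype_eq_three
  have hdual := h.card_shell_mul_innerCount hf (by norm_num) ht (by norm_num) 4
  rw [h.card_shell_three, h.card_shell_four,
    hB.innerCount_shell_reflect (k := 4) (k' := 3) (j' := 2) (by omega) (by omega),
    h.innerCount_three_two_of_three ht] at hdual
  omega

lemma innerCount_two_one_of_three (h : MinimalCounts hB) (ht : vtype B t = 3) :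
    innerCount B (hB.shell 2) 1 t = 48600 := by
  obtain ⟨a, ha⟩ := h.exists_vtype_eq_two
  have hdual := h.card_shell_mul_innerCount ht (by norm_num) ha (by norm_num) 1
  rw [h.card_shell_three, h.card_shell_two, (h.innerCount_three_of_two ha).1] at hdual
  omega

lemma innerCount_three_four_of_three (h : MinimalCounts hB) (ht : vtype B t = 3) :
    innerCount B (hB.shell 3) 4 t = 11178 := by
  obtain ⟨a, ha⟩ := h.exists_vtype_eq_two
  have hdual := h.card_shell_mul_innerCount ht (by norm_num) ha (by norm_num) 2
  rw [h.card_shell_three, h.card_shell_two, (h.innerCount_three_of_two ha).2] at hdual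
  rw [hB.innerCount_shell_reflect (k' := 2) (j' := 2) (by omega) (by omega)]
  omega

end MinimalCounts

end ShortCounts

section Parity

lemma two_mul_card_filter_of_add_iff_not {G : Type*} [AddGroup G] {s : Finset G} {P : G → Prop}
    [DecidablePred P] (a : G) (hs : ∀ x ∈ s, x + a ∈ s) (hP : ∀ x ∈ s, P (x + a) ↔ ¬ P x) :
    2 * {x ∈ s | P x}.card = s.card := by
  have hle : {x ∈ s | P x}.card ≤ {x ∈ s | ¬ P x}.card :=
    Finset.card_le_card_of_injOn (· + a) (fun x hx => by
      simp only [Finset.coe_filter, Set.mem_ofPred_eq] at hx ⊢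
      exact ⟨hs x hx.1, fun h => (hP x hx.1).mp h hx.2⟩) (add_left_injective a).injOn
  have hge : {x ∈ s | ¬ P x}.card ≤ {x ∈ s | P x}.card :=
    Finset.card_le_card_of_injOn (· + a) (fun x hx => by
      simp only [Finset.coe_filter, Set.mem_ofPred_eq] at hx ⊢
      exact ⟨hs x hx.1, (hP x hx.1).mpr hx.2⟩) (add_left_injective a).injOn
  have hsplit : {x ∈ s | P x}.card + {x ∈ s | ¬ P x}.card = s.card :=
    Finset.card_filter_add_card_filter_not P
  omega

/-- A chosen representative in `Λ` of a class of `Λ / 2Λ`. -/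
def classRep (x : Fin 24 → ZMod 2) : LV := Function.surjInv modTwo_surjective x

lemma modTwo_classRep (x : Fin 24 → ZMod 2) : modTwo (classRep x) = x :=
  Function.surjInv_eq modTwo_surjective x

lemma modTwo_classRep_add (x : Fin 24 → ZMod 2) (v : LV) :
    modTwo (classRep x + v) = x + modTwo v := by
  rw [map_add, modTwo_classRep]

/-- The classes on which translation by `t` flips the parity of the type. -/
def flippedClasses (B : Matrix (Fin 24) (Fin 24) ℤ) (t : LV) : Finset (Fin 24 → ZMod 2) :=
  {x | (pairZ B (classRep x) t + vtype B t) % 2 = 1}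

lemma mem_flippedClasses {t : LV} {x : Fin 24 → ZMod 2} :
    x ∈ flippedClasses B t ↔ (pairZ B (classRep x) t + vtype B t) % 2 = 1 := by
  simp [flippedClasses]

namespace IsLeech

variable {t v : LV} {x : Fin 24 → ZMod 2}

lemma exists_pairZ_odd (hB : IsLeech B) (ht : modTwo t ≠ 0) : ∃ v, pairZ B v t % 2 = 1 := by
  obtain ⟨i, hi⟩ := Function.ne_iff.mp ht
  obtain ⟨u, hu⟩ := hB.exists_pairZ_eq_apply i
  refine ⟨u, ?_⟩
  rw [hB.pairZ_comm, hu]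
  have hdvd : ¬ (2 : ℤ) ∣ t i := fun h => hi ((ZMod.intCast_zmod_eq_zero_iff_dvd (t i) 2).mpr h)
  omega

lemma pairZ_classRep_emod_two (hB : IsLeech B) (hv : modTwo v = x) (t : LV) :
    pairZ B (classRep x) t % 2 = pairZ B v t % 2 := by
  rw [hB.pairZ_comm _ t, hB.pairZ_comm _ t]
  exact pairZ_emod_two ((modTwo_classRep x).trans hv.symm) t

lemma vtype_classRep_emod_two (hB : IsLeech B) (hv : modTwo v = x) :
    vtype B (classRep x) % 2 = vtype B v % 2 :=
  hB.vtype_emod_two ((modTwo_classRep x).trans hv.symm)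

lemma modTwo_mem_flippedClasses (hB : IsLeech B) :
    modTwo v ∈ flippedClasses B t ↔ (pairZ B v t + vtype B t) % 2 = 1 := by
  have hpair := hB.pairZ_classRep_emod_two (rfl : modTwo v = _) t
  rw [mem_flippedClasses]
  omega

lemma two_mul_card_flippedClasses (hB : IsLeech B) (ht : modTwo t ≠ 0) :
    2 * (flippedClasses B t).card = 2 ^ 24 := by
  obtain ⟨u, hu⟩ := hB.exists_pairZ_odd ht
  have hcard : (Finset.univ : Finset (Fin 24 → ZMod 2)).card = 2 ^ 24 := by simp
  rw [← hcard]
  refine two_mul_card_filter_of_add_iff_not (modTwo u) (fun _ _ => Finset.mem_univ _) fun x _ => ?_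
  rw [← mem_flippedClasses, ← modTwo_classRep_add, hB.modTwo_mem_flippedClasses,
    pairZ_add_left]
  omega

lemma two_mul_card_odd_flippedClasses (hB : IsLeech B) (t : LV) :
    2 * {x ∈ flippedClasses B t | vtype B (classRep x) % 2 = 1}.card =
      (flippedClasses B t).card := by
  refine two_mul_card_filter_of_add_iff_not (modTwo t) (fun x hx => ?_) fun x hx => ?_ <;>
    rw [mem_flippedClasses] at hx
  · rw [← modTwo_classRep_add, hB.modTwo_mem_flippedClasses, pairZ_add_left, hB.pairZ_self]
    omega
  · rw [hB.vtype_classRep_emod_two (modTwo_classRep_add x t), hB.vtype_add]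
    omega

end IsLeech

namespace ShortVectors

variable {hB : IsLeech B} {t : LV}

/-- A quarter of all classes are flipped by `t` and of odd type, and each of these contains two
vectors of type 3. -/
lemma card_filter_shell_three_odd (h : ShortVectors hB) (ht : modTwo t ≠ 0) :
    {b ∈ hB.shell 3 | (pairZ B b t + vtype B t) % 2 = 1}.card = 2 ^ 23 := by
  have hclasses := hB.two_mul_card_flippedClasses ht
  have hodd := hB.two_mul_card_odd_flippedClasses t
  rw [Finset.card_eq_sum_card_fiberwise (f := modTwo)
    (t := {x ∈ flippedClasses B t | vtype B (classRep x) % 2 = 1}),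
    Finset.sum_const_nat (m := 2)]
  · omega
  · intro x hx
    rw [Finset.mem_filter] at hx
    obtain ⟨s, hs⟩ := h.exists_mem_classShell_three hx.2
    refine Eq.trans ?_ (hB.card_classShell_of_mem hs (by norm_num) (by norm_num))
    rw [IsLeech.classShell, Finset.filter_filter, modTwo_classRep]
    refine congrArg _ (Finset.filter_congr fun b _ => and_iff_right_of_imp fun hb => ?_)
    rw [← hB.modTwo_mem_flippedClasses, hb]
    exact hx.1
  · intro b hb
    simp only [Finset.coe_filter, IsLeech.mem_shell, Set.mem_ofPred_eq] at hb ⊢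
    rw [hB.modTwo_mem_flippedClasses, hB.vtype_classRep_emod_two (v := b) rfl, hb.1]
    exact ⟨hb.2, rfl⟩

end ShortVectors

namespace MinimalCounts

variable {hB : IsLeech B} {t f : LV}

lemma innerCount_three_of_three (h : MinimalCounts hB) (ht : vtype B t = 3) :
    innerCount B (hB.shell 3) 0 t = 5292300 ∧ innerCount B (hB.shell 3) 1 t = 3934656 ∧
      innerCount B (hB.shell 3) 3 t = 257600 := by
  have hself : innerCount B (hB.shell 3) 6 t = 1 := hB.innerCount_self 3 ht
  have hproducts : ∀ s ∈ hB.shell 3, (pairZ B s t).natAbs ∈ ({0, 1, 2, 3, 4, 6} : Finset ℕ) := by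
    intro s hs
    rw [IsLeech.mem_shell] at hs
    have := hB.natAbs_pairZ_le_or_eq (s := s) (w := t) (by omega)
    simp only [Finset.mem_insert, Finset.mem_singleton]
    omega
  have hne : modTwo t ≠ 0 := fun h0 => by
    obtain ⟨u, rfl⟩ := modTwo_eq_zero_iff.mp h0
    have hu := hB.vtype_two_smul u
    omega
  have heven : (innerCount B (hB.shell 3) 0 t : ℤ) + (2 * innerCount B (hB.shell 3) 2 t +
      (2 * innerCount B (hB.shell 3) 4 t + 2 * innerCount B (hB.shell 3) 6 t)) = 2 ^ 23 := by
    have hsum := sum_pairZ_eq_sum_innerCount IsLeech.neg_mem_shell hproducts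
      (fun j => if j % 2 = 0 then 1 else 0) fun j => by simp
    have hcard := h.card_filter_shell_three_odd hne
    rw [Finset.filter_congr (q := fun b => pairZ B b t % 2 = 0) fun b _ => by omega] at hcard
    rw [← Finset.sum_filter, Finset.sum_const, hcard] at hsum
    simpa using hsum.symm
  have hmoments : (innerCount B (hB.shell 3) 0 t : ℤ) + (2 * innerCount B (hB.shell 3) 1 t +
        (2 * innerCount B (hB.shell 3) 2 t + (2 * innerCount B (hB.shell 3) 3 t +
        (2 * innerCount B (hB.shell 3) 4 t + 2 * innerCount B (hB.shell 3) 6 t)))) = 16773120 ∧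
      6 * (2 * (innerCount B (hB.shell 3) 1 t : ℤ) + (8 * innerCount B (hB.shell 3) 2 t +
        (18 * innerCount B (hB.shell 3) 3 t + (32 * innerCount B (hB.shell 3) 4 t +
        72 * innerCount B (hB.shell 3) 6 t)))) = 150958080 := by
    simpa [ht, h.card_shell_three] using h.shell_moments hproducts
  rw [h.innerCount_three_two_of_three ht, h.innerCount_three_four_of_three ht, hself] at *
  omega

lemma card_filter_shell_three_even_of_four (h : MinimalCounts hB) (hf : vtype B f = 4) :
    {b ∈ hB.shell 3 | pairZ B b f % 2 = 0}.card = 8384512 := by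
  have hne : modTwo f ≠ 0 := fun h0 => by
    obtain ⟨u, rfl⟩ := modTwo_eq_zero_iff.mp h0
    have hu := hB.vtype_two_smul u
    rw [hB.eq_zero_of_vtype_lt_two (v := u) (by omega), smul_zero, vtype_zero] at hf
    omega
  have hodd := h.card_filter_shell_three_odd hne
  have hsplit := Finset.card_filter_add_card_filter_not (s := hB.shell 3)
    fun b => (pairZ B b f + vtype B f) % 2 = 1
  rw [hodd, h.card_shell_three] at hsplit
  rw [Finset.filter_congr (q := fun b => ¬ (pairZ B b f + vtype B f) % 2 = 1) fun b _ => by omega]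
  omega

end MinimalCounts

end Parity

section SignChanges

lemma two_mul_card_filter_even_powerset {α : Type*} {J : Finset α} (hJ : J.Nonempty) :
    2 * {I ∈ J.powerset | Even I.card}.card = 2 ^ J.card := by
  have hsign (I : Finset α) : (-1 : ℤ) ^ I.card = 2 * (if Even I.card then 1 else 0) - 1 := by
    split_ifs with heven
    · rw [heven.neg_one_pow]
      rfl
    · rw [(Nat.not_even_iff_odd.mp heven).neg_one_pow]
      rfl
  have hsum := Finset.sum_powerset_neg_one_pow_card_of_nonempty hJ
  simp only [hsign, Finset.sum_sub_distrib, ← Finset.mul_sum, Finset.sum_boole, Finset.sum_const,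
    Finset.card_powerset, nsmul_eq_mul, mul_one, sub_eq_zero] at hsum
  exact_mod_cast hsum

namespace IsLeech

variable {w f : LV}

/-- For `w` of type 6 congruent to a vector of type 4, one vector from each pair `±f` of the frame
congruent to `w`. -/
def halfFrame (hB : IsLeech B) (w : LV) : Finset LV := {f ∈ hB.classShell 4 w | pairZ B f w = 2}

lemma isOrthogonalSet_halfFrame (hB : IsLeech B) (w : LV) :
    IsOrthogonalSet B 8 (hB.halfFrame w) :=
  hB.isOrthogonalSet_filter w _ fun f _ h h' => by
    rw [pairZ_neg_left] at h'
    omega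

lemma modTwo_of_mem_halfFrame {hB : IsLeech B} (hf : f ∈ hB.halfFrame w) :
    modTwo f = modTwo w :=
  (mem_classShell.mp (Finset.mem_filter.mp hf).1).2

lemma pairZ_halfFrame_emod_two {hB : IsLeech B} (hf : f ∈ hB.halfFrame w) (a : LV) :
    pairZ B f a % 2 = pairZ B a w % 2 := by
  rw [hB.pairZ_comm]
  exact pairZ_emod_two (modTwo_of_mem_halfFrame hf) a

/-- The half sum of evenly many frame vectors is a lattice vector, as these are congruent. -/
lemma exists_half_sum (hB : IsLeech B) {I : Finset LV} (hI : I ⊆ hB.halfFrame w)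
    (heven : Even I.card) :
    ∃ v, ∀ g ∈ hB.halfFrame w, pairZ B g v = if g ∈ I then 4 else 0 := by
  have horth := hB.isOrthogonalSet_halfFrame w
  have hsum : modTwo (∑ f ∈ I, f) = 0 := by
    rw [map_sum, Finset.sum_congr rfl fun f hf => modTwo_of_mem_halfFrame (hI hf),
      Finset.sum_const, ← map_nsmul, modTwo_eq_zero_iff]
    obtain ⟨r, hr⟩ := heven
    exact ⟨r • w, by rw [hr, two_smul, add_smul]⟩
  obtain ⟨v, hv⟩ := modTwo_eq_zero_iff.mp hsum
  refine ⟨v, fun g hg => ?_⟩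
  have hdouble : 2 * pairZ B g v = ∑ f ∈ I, pairZ B f g := by
    rw [← pairZ_smul_right, ← hv, hB.pairZ_comm, pairZ_sum_left]
  split_ifs with hgI
  · rw [Finset.sum_eq_single_of_mem g hgI fun f hf hne =>
      horth.pairZ_eq_zero f (hI hf) g hg hne, horth.pairZ_self g hg] at hdouble
    omega
  · rw [Finset.sum_eq_zero fun f hf =>
      horth.pairZ_eq_zero f (hI hf) g hg (ne_of_mem_of_not_mem hf hgI)] at hdouble
    omega

/-- The vectors of type `k` whose inner products with the frame congruent to `w` are `0` and
`±2`. -/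
def smallShell (hB : IsLeech B) (k : ℤ) (w : LV) : Finset LV :=
  {a ∈ hB.shell k | ∀ f ∈ hB.classShell 4 w, (pairZ B f a).natAbs = 0 ∨ (pairZ B f a).natAbs = 2}

end IsLeech

namespace ShortVectors

variable {hB : IsLeech B} {w a b f : LV} {k : ℤ}

lemma card_halfFrame (h : ShortVectors hB) (hw : w ∈ hB.congrShell 6 4) :
    (hB.halfFrame w).card = 24 :=
  h.innerCount_classShell_two_of_six_four hw

lemma sum_halfFrame (h : ShortVectors hB) (hw : w ∈ hB.congrShell 6 4) (a : LV) :
    ∑ f ∈ hB.halfFrame w, pairZ B f a = 4 * pairZ B a w := by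
  have hparseval := (hB.isOrthogonalSet_halfFrame w).parseval (by norm_num) (h.card_halfFrame hw)
    a w
  rw [Finset.sum_congr rfl fun f hf => by rw [hB.pairZ_comm, (Finset.mem_filter.mp hf).2],
    ← Finset.sum_mul] at hparseval
  omega

lemma sum_sq_halfFrame (h : ShortVectors hB) (hw : w ∈ hB.congrShell 6 4) (a : LV) :
    ∑ f ∈ hB.halfFrame w, pairZ B f a ^ 2 = 16 * vtype B a := by
  have hparseval := (hB.isOrthogonalSet_halfFrame w).parseval (by norm_num) (h.card_halfFrame hw)
    a a
  simp only [hB.pairZ_comm a, ← sq, hB.pairZ_self] at hparseval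
  omega

lemma vtype_eq_of_sq_eq (h : ShortVectors hB) (hw : w ∈ hB.congrShell 6 4)
    (hab : ∀ f ∈ hB.halfFrame w, pairZ B f a ^ 2 = pairZ B f b ^ 2) : vtype B a = vtype B b := by
  have hsum := Finset.sum_congr rfl hab
  rw [h.sum_sq_halfFrame hw, h.sum_sq_halfFrame hw] at hsum
  omega

lemma mem_smallShell_iff (hw : w ∈ hB.congrShell 6 4) : a ∈ hB.smallShell k w ↔
    vtype B a = k ∧ ∀ f ∈ hB.halfFrame w, (pairZ B f a).natAbs = 0 ∨ (pairZ B f a).natAbs = 2 := by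
  rw [IsLeech.smallShell, Finset.mem_filter, IsLeech.mem_shell]
  refine and_congr_right fun _ => ⟨fun ha f hf => ha f (Finset.mem_filter.mp hf).1,
    fun ha f hf => ?_⟩
  rcases Int.natAbs_eq_iff.mp (natAbs_pairZ_of_six_four hw f hf) with hpos | hneg
  · exact ha f (Finset.mem_filter.mpr ⟨hf, hpos⟩)
  · have hmem : -f ∈ hB.halfFrame w := Finset.mem_filter.mpr
      ⟨IsLeech.neg_mem_classShell f hf, by simp [pairZ_neg_left, hneg]⟩
    simpa [pairZ_neg_left] using ha (-f) hmem

/-- In terms of the frame products `x` of `a`, the equation `(a, w) = 2 * vtype a` reads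
`∑ x (x - 2) = 0`, where the `x` are even. -/
lemma pairZ_eq_two_mul_vtype_iff (h : ShortVectors hB) (hw : w ∈ hB.congrShell 6 4) :
    pairZ B a w = 2 * vtype B a ↔
      ∀ f ∈ hB.halfFrame w, pairZ B f a = 0 ∨ pairZ B f a = 2 := by
  have hsum : ∑ f ∈ hB.halfFrame w, pairZ B f a * (pairZ B f a - 2) =
      16 * vtype B a - 8 * pairZ B a w := by
    simp only [mul_sub, Finset.sum_sub_distrib, ← sq, ← Finset.sum_mul, h.sum_halfFrame hw,
      h.sum_sq_halfFrame hw]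
    ring
  constructor
  · intro haw f hf
    have hnonneg : ∀ f ∈ hB.halfFrame w, 0 ≤ pairZ B f a * (pairZ B f a - 2) := fun f hf => by
      have hparity := IsLeech.pairZ_halfFrame_emod_two hf a
      obtain hle | hge : pairZ B f a ≤ 0 ∨ 2 ≤ pairZ B f a := by omega
      · exact mul_nonneg_of_nonpos_of_nonpos hle (by omega)
      · exact mul_nonneg (by omega) (by omega)
    rw [haw, show 16 * vtype B a - 8 * (2 * vtype B a) = 0 by ring,
      Finset.sum_eq_zero_iff_of_nonneg hnonneg] at hsum
    exact (mul_eq_zero.mp (hsum f hf)).imp_right sub_eq_zero.mp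
  · intro hproducts
    rw [Finset.sum_eq_zero fun f hf => by
      rcases hproducts f hf with hf0 | hf2
      · rw [hf0, zero_mul]
      · rw [hf2, sub_self, mul_zero]] at hsum
    omega

lemma card_support_of_mem_smallShell (h : ShortVectors hB) (hw : w ∈ hB.congrShell 6 4)
    (ha : a ∈ hB.smallShell k w) :
    ({f ∈ hB.halfFrame w | pairZ B f a ≠ 0}.card : ℤ) = 4 * k ∧
      Even {f ∈ hB.halfFrame w | pairZ B f a = -2}.card := by
  obtain ⟨rfl, hproducts⟩ := (mem_smallShell_iff hw).mp ha
  have hsq : ∑ f ∈ hB.halfFrame w, pairZ B f a ^ 2 =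
      4 * {f ∈ hB.halfFrame w | pairZ B f a ≠ 0}.card := by
    rw [← Finset.sum_boole, Finset.mul_sum]
    refine Finset.sum_congr rfl fun f hf => ?_
    obtain h0 | h2 | h2' : pairZ B f a = 0 ∨ pairZ B f a = 2 ∨ pairZ B f a = -2 := by
      have := hproducts f hf
      omega
    all_goals simp [*]
  have hlin : ∑ f ∈ hB.halfFrame w, pairZ B f a =
      2 * {f ∈ hB.halfFrame w | pairZ B f a ≠ 0}.card -
        4 * {f ∈ hB.halfFrame w | pairZ B f a = -2}.card := by
    rw [← Finset.sum_boole, ← Finset.sum_boole, Finset.mul_sum, Finset.mul_sum,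
      ← Finset.sum_sub_distrib]
    refine Finset.sum_congr rfl fun f hf => ?_
    obtain h0 | h2 | h2' : pairZ B f a = 0 ∨ pairZ B f a = 2 ∨ pairZ B f a = -2 := by
      have := hproducts f hf
      omega
    all_goals simp [*]
  obtain ⟨f, hf⟩ : (hB.halfFrame w).Nonempty := by
    rw [← Finset.card_pos, h.card_halfFrame hw]
    norm_num
  have hparity := IsLeech.pairZ_halfFrame_emod_two hf a
  have := hproducts f hf
  rw [h.sum_sq_halfFrame hw] at hsq
  rw [h.sum_halfFrame hw] at hlin
  rw [Nat.even_iff]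
  omega

lemma sub_mem_smallShell (h : ShortVectors hB) (hw : w ∈ hB.congrShell 6 4)
    (hb : b ∈ hB.shell k) (hbw : pairZ B b w = 2 * k) {I : Finset LV}
    (hI : I ⊆ {f ∈ hB.halfFrame w | pairZ B f b ≠ 0})
    (ha : ∀ g ∈ hB.halfFrame w, pairZ B g a = if g ∈ I then 4 else 0) :
    b - a ∈ hB.smallShell k w ∧ {f ∈ hB.halfFrame w | pairZ B f (b - a) = -2} = I := by
  rw [IsLeech.mem_shell] at hb
  subst hb
  have hproducts : ∀ g ∈ hB.halfFrame w, (pairZ B g (b - a) = pairZ B g b ∧ g ∉ I) ∨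
      (pairZ B g (b - a) = -pairZ B g b ∧ pairZ B g b = 2 ∧ g ∈ I) := fun g hg => by
    have hgb := (h.pairZ_eq_two_mul_vtype_iff hw).mp hbw g hg
    rw [pairZ_sub_right, ha g hg]
    split_ifs with hgI
    · have := (Finset.mem_filter.mp (hI hgI)).2
      exact .inr ⟨by omega, by omega, hgI⟩
    · exact .inl ⟨sub_zero _, hgI⟩
  have htype : vtype B (b - a) = vtype B b := h.vtype_eq_of_sq_eq hw fun g hg => by
    rcases hproducts g hg with ⟨hgb, -⟩ | ⟨hgb, -⟩ <;> rw [hgb]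
    exact neg_sq _
  refine ⟨(mem_smallShell_iff hw).mpr ⟨htype, fun g hg => ?_⟩, Finset.ext fun g => ?_⟩
  · have hgb := (h.pairZ_eq_two_mul_vtype_iff hw).mp hbw g hg
    have := hproducts g hg
    omega
  · rw [Finset.mem_filter]
    constructor
    · rintro ⟨hg, hneg⟩
      have hgb := (h.pairZ_eq_two_mul_vtype_iff hw).mp hbw g hg
      rcases hproducts g hg with ⟨hgb', -⟩ | ⟨-, -, hgI⟩
      · omega
      · exact hgI
    · intro hgI
      have hg := (Finset.mem_filter.mp (hI hgI)).1
      rcases hproducts g hg with ⟨-, hgI'⟩ | ⟨hgb', hgb, -⟩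
      · exact absurd hgI hgI'
      · exact ⟨hg, by omega⟩

lemma add_mem_of_mem_smallShell (h : ShortVectors hB) (hw : w ∈ hB.congrShell 6 4)
    (hb : b ∈ hB.smallShell k w)
    (ha : ∀ g ∈ hB.halfFrame w,
      pairZ B g a = if g ∈ {f ∈ hB.halfFrame w | pairZ B f b = -2} then 4 else 0) :
    b + a ∈ {c ∈ hB.shell k | pairZ B c w = 2 * k} ∧
      {f ∈ hB.halfFrame w | pairZ B f b = -2} ⊆ {f ∈ hB.halfFrame w | pairZ B f (b + a) ≠ 0} := by
  obtain ⟨rfl, hsmall⟩ := (mem_smallShell_iff hw).mp hb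
  have hproducts : ∀ g ∈ hB.halfFrame w, pairZ B g (b + a) = (pairZ B g b).natAbs := fun g hg => by
    have := hsmall g hg
    rw [pairZ_add_right, ha g hg]
    simp only [Finset.mem_filter, hg, true_and]
    split_ifs <;> omega
  have htype : vtype B (b + a) = vtype B b := h.vtype_eq_of_sq_eq hw fun g hg => by
    rw [hproducts g hg, Int.natAbs_sq]
  refine ⟨Finset.mem_filter.mpr ⟨IsLeech.mem_shell.mpr htype, ?_⟩, fun g hg => ?_⟩
  · rw [← htype, h.pairZ_eq_two_mul_vtype_iff hw]
    intro g hg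
    have := hsmall g hg
    rw [hproducts g hg]
    omega
  · obtain ⟨hg, hneg⟩ := Finset.mem_filter.mp hg
    exact Finset.mem_filter.mpr ⟨hg, by rw [hproducts g hg, hneg]; norm_num⟩

lemma card_smallShell_eq_sum (h : ShortVectors hB) (hw : w ∈ hB.congrShell 6 4) :
    (hB.smallShell k w).card = ∑ b ∈ hB.shell k with pairZ B b w = 2 * k,
      {I ∈ {f ∈ hB.halfFrame w | pairZ B f b ≠ 0}.powerset | Even I.card}.card := by
  rw [← Finset.card_sigma]
  choose! halfSum hhalfSum using fun (I : Finset LV) (hI : I ⊆ hB.halfFrame w ∧ Even I.card) =>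
    hB.exists_half_sum hI.1 hI.2
  have hnegatives {a : LV} (ha : a ∈ hB.smallShell k w) := hhalfSum
    {f ∈ hB.halfFrame w | pairZ B f a = -2}
    ⟨Finset.filter_subset _ _, (h.card_support_of_mem_smallShell hw ha).2⟩
  refine Finset.card_nbij'
    (fun a => ⟨a + halfSum {f ∈ hB.halfFrame w | pairZ B f a = -2},
      {f ∈ hB.halfFrame w | pairZ B f a = -2}⟩)
    (fun p => p.1 - halfSum p.2) ?_ ?_ ?_ ?_
  · intro a ha
    obtain ⟨hshell, hsubset⟩ := h.add_mem_of_mem_smallShell hw ha (hnegatives ha)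
    exact Finset.mem_sigma.mpr ⟨hshell, Finset.mem_filter.mpr
      ⟨Finset.mem_powerset.mpr hsubset, (h.card_support_of_mem_smallShell hw ha).2⟩⟩
  · rintro ⟨b, I⟩ hp
    simp only [Finset.mem_coe, Finset.mem_sigma, Finset.mem_filter, Finset.mem_powerset] at hp
    exact (h.sub_mem_smallShell hw hp.1.1 hp.1.2 hp.2.1
      (hhalfSum I ⟨hp.2.1.trans (Finset.filter_subset _ _), hp.2.2⟩)).1
  · intro a _
    exact add_sub_cancel_right _ _
  · rintro ⟨b, I⟩ hp
    simp only [Finset.mem_coe, Finset.mem_sigma, Finset.mem_filter, Finset.mem_powerset] at hp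
    have hI := (h.sub_mem_smallShell hw hp.1.1 hp.1.2 hp.2.1
      (hhalfSum I ⟨hp.2.1.trans (Finset.filter_subset _ _), hp.2.2⟩)).2
    simp only [hI, sub_add_cancel]

/-- Changing evenly many signs among the `4 * k` nonzero frame products of a vector `b` with
`(b, w) = 2 * k` gives every vector with frame products `0, ±2` exactly once. -/
theorem card_smallShell (h : ShortVectors hB) (hw : w ∈ hB.congrShell 6 4) {n : ℕ}
    (hn : 4 * k = n + 1) :
    (hB.smallShell k w).card = innerCount B (hB.shell k) (2 * k) w * 2 ^ n := by
  rw [h.card_smallShell_eq_sum hw, innerCount, Finset.sum_const_nat]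
  intro b hb
  obtain ⟨hbk, hbw⟩ := Finset.mem_filter.mp hb
  rw [IsLeech.mem_shell] at hbk
  subst hbk
  have hbsmall : b ∈ hB.smallShell (vtype B b) w := (mem_smallShell_iff hw).mpr ⟨rfl, fun f hf => by
    have := (h.pairZ_eq_two_mul_vtype_iff hw).mp hbw f hf
    omega⟩
  have hsupport : {f ∈ hB.halfFrame w | pairZ B f b ≠ 0}.card = n + 1 := by
    have := (h.card_support_of_mem_smallShell hw hbsmall).1
    omega
  have hnonempty : {f ∈ hB.halfFrame w | pairZ B f b ≠ 0}.Nonempty :=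
    Finset.card_pos.mp (hsupport ▸ n.succ_pos)
  have hpowerset := two_mul_card_filter_even_powerset hnonempty
  rw [hsupport, pow_succ'] at hpowerset
  exact Nat.eq_of_mul_eq_mul_left two_pos hpowerset

end ShortVectors

end SignChanges

section TypeSix

namespace IsLeech

variable {hB : IsLeech B} {w a b f g : LV}

lemma eq_or_eq_neg_or_orthogonal_of_mem_classShell_four (hf : f ∈ hB.classShell 4 w)
    (hg : g ∈ hB.classShell 4 w) : g = f ∨ g = -f ∨ pairZ B g f = 0 := by
  rw [mem_classShell] at hf hg
  exact (hB.eq_or_eq_neg_or_orthogonal (hg.2.trans hf.2.symm) hg.1.le hf.1.le).imp_right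
    (Or.imp_right fun h => h.2.2)

/-- Otherwise `2a - g` would be a further frame vector, with `(2a - g, f)` not divisible by 8. -/
lemma pairZ_ne_four_of_mem_classShell_four (ha : vtype B a = 2) (hf : f ∈ hB.classShell 4 w)
    (hfa : pairZ B f a = 2) (hg : g ∈ hB.classShell 4 w) : pairZ B g a ≠ 4 := fun hga => by
  have hdvd {s : LV} (hs : s ∈ hB.classShell 4 w) : 8 ∣ pairZ B s f := by
    have hff := hB.pairZ_self f
    rw [(mem_classShell.mp hf).1] at hff
    rcases eq_or_eq_neg_or_orthogonal_of_mem_classShell_four hf hs with rfl | rfl | horth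
    · omega
    · rw [pairZ_neg_left]
      omega
    · omega
  have hmem : (2 : ℤ) • a - g ∈ hB.classShell 4 w := by
    rw [mem_classShell] at hg ⊢
    rw [hB.vtype_sub, hB.vtype_two_smul, pairZ_smul_left, hB.pairZ_comm, map_sub,
      modTwo_two_smul, zero_sub, ← map_neg, modTwo_neg]
    exact ⟨by omega, hg.2⟩
  have hsub := hdvd hmem
  have hgf := hdvd hg
  rw [pairZ_sub_left, pairZ_smul_left, hB.pairZ_comm, hfa] at hsub
  omega

/-- Two orthogonal frame vectors having inner product 4 with `b` would have a half sum of type 2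
having inner product 4 with `b`. -/
lemma eq_of_mem_classShell_four_of_pairZ_eq_four (hb : vtype B b = 3)
    (hf : f ∈ hB.classShell 4 w) (hfb : pairZ B f b = 4) (hg : g ∈ hB.classShell 4 w)
    (hgb : pairZ B g b = 4) : g = f := by
  rcases eq_or_eq_neg_or_orthogonal_of_mem_classShell_four hf hg with rfl | rfl | horth
  · rfl
  · rw [pairZ_neg_left] at hgb
    omega
  · rw [mem_classShell] at hf hg
    obtain ⟨c, d, rfl, rfl, hc, -⟩ := hB.exists_half_add_sub (hg.2.trans hf.2.symm)
    rw [pairZ_add_left] at hfb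
    rw [pairZ_sub_left] at hgb
    have hne : c ≠ b := by
      rintro rfl
      omega
    have := hB.pairZ_le hne
    omega

lemma filter_even_eq_smallShell_union (hf : f ∈ hB.classShell 4 w) :
    {b ∈ hB.shell 3 | pairZ B b f % 2 = 0} = hB.smallShell 3 w ∪
      {b ∈ hB.shell 3 | ∃ g ∈ hB.classShell 4 w, pairZ B g b = 4} := by
  rw [smallShell, ← Finset.filter_or]
  refine Finset.filter_congr fun b hb => ?_
  have hparity {g : LV} (hg : g ∈ hB.classShell 4 w) : pairZ B g b % 2 = pairZ B b f % 2 := by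
    rw [mem_classShell] at hf hg
    rw [hB.pairZ_comm, pairZ_emod_two (hg.2.trans hf.2.symm)]
  rw [mem_shell] at hb
  constructor
  · refine fun hbf => or_iff_not_imp_right.mpr fun hne g hg => ?_
    push Not at hne
    have hpos := hne g hg
    have hneg := hne (-g) (neg_mem_classShell g hg)
    rw [pairZ_neg_left] at hneg
    have hg2 := hparity hg
    rw [mem_classShell] at hg
    have := hB.natAbs_pairZ_le_of_vtype_ne (s := g) (w := b) (by omega)
    omega
  · rintro (hsmall | ⟨g, hg, hgb⟩)
    · have := hsmall f hf
      have := hparity hf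
      omega
    · have := hparity hg
      omega

end IsLeech

namespace ShortVectors

variable {hB : IsLeech B} {w : LV}

lemma card_classShell_four_of_six_four (h : ShortVectors hB) (hw : w ∈ hB.congrShell 6 4) :
    (hB.classShell 4 w).card = 48 := by
  obtain ⟨f, hf⟩ := IsLeech.exists_mem_classShell (IsLeech.mem_congrShell.mp hw).2
  rw [IsLeech.mem_classShell] at hf
  rw [hB.classShell_congr 4 hf.2.symm, h.card_classShell_four hf.1]

lemma card_smallShell_two_mul_eight (h : ShortVectors hB) (hw : w ∈ hB.congrShell 6 4) {n : ℕ}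
    (hn : ∀ f, vtype B f = 4 → innerCount B (hB.shell 2) 2 f = n) :
    (hB.smallShell 2 w).card * 8 = 48 * n := by
  rw [← h.card_classShell_four_of_six_four hw]
  refine hB.card_mul_eq_card_mul (j := 2) (fun a ha => ?_) fun f hf => ?_
  · obtain ⟨ha2, hproducts⟩ := Finset.mem_filter.mp ha
    rw [IsLeech.mem_shell] at ha2
    have hmoments :
        (innerCount B (hB.classShell 4 w) 0 a : ℤ) + 2 * innerCount B (hB.classShell 4 w) 2 a = 48 ∧
        (2 : ℤ) * 2 ^ 2 * innerCount B (hB.classShell 4 w) 2 a = 32 * 2 := by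
      simpa [ha2] using h.frame_moments (IsLeech.mem_congrShell.mp hw).2 (a := a) (J := {0, 2})
        fun s hs => by simpa using hproducts s hs
    omega
  · rw [← hn f (IsLeech.mem_classShell.mp hf).1, IsLeech.smallShell]
    refine congrArg Finset.card ?_
    rw [Finset.filter_filter]
    refine Finset.filter_congr fun a ha => and_iff_right_of_imp fun haf g hg => ?_
    rw [IsLeech.mem_shell] at ha
    rw [hB.pairZ_comm] at haf
    have hpos := IsLeech.pairZ_ne_four_of_mem_classShell_four ha hf haf hg
    have hneg := IsLeech.pairZ_ne_four_of_mem_classShell_four ha hf haf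
      (IsLeech.neg_mem_classShell g hg)
    rw [pairZ_neg_left] at hneg
    rw [IsLeech.mem_classShell] at hf hg
    have hparity := pairZ_emod_two (B := B) (hg.2.trans hf.2.symm) a
    rw [hB.pairZ_comm, hB.pairZ_comm a] at hparity
    have := hB.natAbs_pairZ_le_of_vtype_ne (s := g) (w := a) (by omega)
    omega

end ShortVectors

namespace MinimalCounts

variable {hB : IsLeech B} {w : LV}

lemma innerCount_two_four_of_six_four (h : MinimalCounts hB) (hw : w ∈ hB.congrShell 6 4) :
    innerCount B (hB.shell 2) 4 w = 759 := by
  have hsmall := h.card_smallShell_two_mul_eight hw fun _ => h.innerCount_two_two_of_four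
  have hsigns : (hB.smallShell 2 w).card = innerCount B (hB.shell 2) 4 w * 2 ^ 7 :=
    h.card_smallShell hw (by norm_num)
  omega

lemma card_filter_exists_pairZ_eq_four (h : MinimalCounts hB) (hw : w ∈ hB.congrShell 6 4) :
    {b ∈ hB.shell 3 | ∃ g ∈ hB.classShell 4 w, pairZ B g b = 4}.card = 48 * 64768 := by
  rw [← h.card_classShell_four_of_six_four hw, ← mul_one (Finset.card _)]
  refine hB.card_mul_eq_card_mul (j := 4) (fun b hb => ?_) fun f hf => ?_
  · obtain ⟨hb, g, hg, hgb⟩ := Finset.mem_filter.mp hb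
    refine Finset.card_eq_one.mpr ⟨g, Finset.ext fun f => ?_⟩
    rw [Finset.mem_filter, Finset.mem_singleton]
    constructor
    · rintro ⟨hf, hfb⟩
      exact IsLeech.eq_of_mem_classShell_four_of_pairZ_eq_four (IsLeech.mem_shell.mp hb) hg hgb
        hf hfb
    · rintro rfl
      exact ⟨hg, hgb⟩
  · rw [← h.innerCount_three_four_of_four (IsLeech.mem_classShell.mp hf).1]
    refine congrArg Finset.card ?_
    rw [Finset.filter_filter]
    refine Finset.filter_congr fun b _ => and_iff_right_of_imp fun hbf => ⟨f, hf, ?_⟩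
    rw [hB.pairZ_comm, hbf]

lemma innerCount_three_six_of_six_four (h : MinimalCounts hB) (hw : w ∈ hB.congrShell 6 4) :
    innerCount B (hB.shell 3) 6 w = 2576 := by
  obtain ⟨f, hf⟩ := IsLeech.exists_mem_classShell (IsLeech.mem_congrShell.mp hw).2
  have heven := h.card_filter_shell_three_even_of_four (IsLeech.mem_classShell.mp hf).1
  have hdisjoint : Disjoint (hB.smallShell 3 w)
      {b ∈ hB.shell 3 | ∃ g ∈ hB.classShell 4 w, pairZ B g b = 4} := by
    refine Finset.disjoint_filter.mpr fun b _ hsmall ⟨g, hg, hgb⟩ => ?_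
    have := hsmall g hg
    omega
  have hsigns : (hB.smallShell 3 w).card = innerCount B (hB.shell 3) 6 w * 2 ^ 11 :=
    h.card_smallShell hw (by norm_num)
  rw [IsLeech.filter_even_eq_smallShell_union hf, Finset.card_union_of_disjoint hdisjoint,
    h.card_filter_exists_pairZ_eq_four hw] at heven
  omega

end MinimalCounts

namespace OrbitData

variable {hB : IsLeech B} {O O' : Set LV} {x c : ℕ} {u : LV}

lemma notMem_of_card_ne {x' c' : ℕ} (hO : OrbitData B O x c) (hO' : OrbitData B O' x' c')
    (hB : IsLeech B) (hne : c ≠ c') (hu : u ∈ O) : u ∉ O' := fun hu' =>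
  hne (by rw [← hO.2.2, ← hO'.2.2, hO.eq_orbit hB hu, hO'.eq_orbit hB hu'])

lemma eq_congrShell_six_four (h6a : OrbitData B O 6 (518400 * 65520)) (h : MinimalCounts hB) :
    O = hB.congrShell 6 4 :=
  h6a.eq_coe_of_subset (fun _ hu => h6a.mem_congrShell_six_four h.toShortVectors hu)
    h.card_congrShell_six_four.le

lemma eq_congrShell_six_two (h6b : OrbitData B O' 6 (6900 * 65520))
    (h6a : OrbitData B O 6 (518400 * 65520)) (h : MinimalCounts hB) :
    O' = hB.congrShell 6 2 := by
  refine h6b.eq_coe_of_subset (fun u hu => ?_) h.card_congrShell_six_two.le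
  refine (h.mem_congrShell_two_or_four_of_six (h6b.vtype_eq hu)).resolve_right fun hu4 => ?_
  exact h6b.notMem_of_card_ne h6a hB (by norm_num) hu (h6a.eq_congrShell_six_four h ▸ hu4)

end OrbitData

namespace MinimalCounts

variable {hB : IsLeech B} {a w : LV}

lemma filter_notMem_classes_eq_congrShell_six_two (h : MinimalCounts hB) :
    {w ∈ hB.shell 6 | modTwo w ∉ hB.classes 4} = hB.congrShell 6 2 := by
  ext w
  rw [Finset.mem_filter, IsLeech.mem_shell]
  constructor
  · rintro ⟨hw, hw4⟩
    exact (h.mem_congrShell_two_or_four_of_six hw).resolve_right fun hmem =>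
      hw4 (IsLeech.mem_congrShell.mp hmem).2
  · intro hw
    rw [IsLeech.mem_congrShell] at hw
    exact ⟨hw.1, Finset.disjoint_left.mp
      (hB.disjoint_classes (by norm_num) (by norm_num) (by norm_num)) hw.2⟩

lemma card_mul_add_card_mul_innerCount_of_six (h : MinimalCounts hB) {c m : ℕ}
    (horbit : OrbitData B (hB.congrShell 6 2) 6 c) (hw : w ∈ hB.congrShell 6 2) {k j : ℤ}
    (hm : ∀ v ∈ hB.congrShell 6 4, innerCount B (hB.shell k) j v = m) (ha : vtype B a = k)
    (hk : k ≤ 4) :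
    518400 * 65520 * m + 6900 * 65520 * innerCount B (hB.shell k) j w =
      (hB.shell k).card * innerCount B (hB.shell 6) j a := by
  rw [← h.card_congrShell_six_four, ← h.card_congrShell_six_two,
    ← h.filter_notMem_classes_eq_congrShell_six_two]
  refine h.card_filter_mul_add_card_filter_mul (P := fun v => modTwo v ∈ hB.classes 4)
    (fun v hv hv4 => hm v (IsLeech.mem_congrShell.mpr ⟨hv, hv4⟩)) (fun v hv hv4 => ?_) ha hk
  refine horbit.innerCount_eq hB (Finset.mem_coe.mpr ?_) hw k j
  rw [← h.filter_notMem_classes_eq_congrShell_six_two]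
  exact Finset.mem_filter.mpr ⟨IsLeech.mem_shell.mpr hv, hv4⟩

lemma innerCount_of_six_two (h : MinimalCounts hB) {c : ℕ}
    (horbit : OrbitData B (hB.congrShell 6 2) 6 c) (hw : w ∈ hB.congrShell 6 2) :
    innerCount B (hB.shell 2) 4 w = 891 ∧ innerCount B (hB.shell 3) 6 w = 2816 := by
  obtain ⟨a, ha⟩ := h.exists_vtype_eq_two
  obtain ⟨t, ht⟩ := h.exists_vtype_eq_three
  have htwo := h.card_mul_add_card_mul_innerCount_of_six horbit hw
    (fun _ => h.innerCount_two_four_of_six_four) ha (by norm_num)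
  have hthree := h.card_mul_add_card_mul_innerCount_of_six horbit hw
    (fun _ => h.innerCount_three_six_of_six_four) ht (by norm_num)
  rw [hB.innerCount_shell_reflect (w := a) (k' := 4) (j' := 0) (by omega) (by omega),
    (h.innerCount_four_of_two ha).1, h.card_shell_two] at htwo
  rw [hB.innerCount_shell_reflect (w := t) (k' := 3) (j' := 0) (by omega) (by omega),
    (h.innerCount_three_of_three ht).1, h.card_shell_three] at hthree
  omega

end MinimalCounts

end TypeSix

section OrbitIdentification

namespace IsLeech

variable {hB : IsLeech B} {x k l j : ℤ} {w : LV}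

/-- The vectors of type `x` that are a sum of vectors of types `k` and `l`: if `w = a + b` with
`a` of type `k`, then `b` has type `l` exactly when `(a, w) = k + x - l`. -/
def sumShell (hB : IsLeech B) (x k l : ℤ) : Finset LV :=
  {w ∈ hB.shell x | 0 < innerCount B (hB.shell k) (k + x - l) w}

lemma mem_sumShell (hj : j = k + x - l) :
    w ∈ hB.sumShell x k l ↔ vtype B w = x ∧ 0 < innerCount B (hB.shell k) j w := by
  rw [sumShell, Finset.mem_filter, mem_shell, hj]

end IsLeech

lemma smul_add_eq_self_of_pair {G M : Type*} [Group G] [AddCommMonoid M] [DistribMulAction G M]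
    {σ : G} {f g : M} (hfg : f ≠ g) (hperm : ∀ s, s = f ∨ s = g → σ • s = f ∨ σ • s = g) :
    σ • (f + g) = f + g := by
  have hne : σ • f ≠ σ • g := fun heq => hfg (MulAction.injective σ heq)
  rw [smul_add]
  rcases hperm f (.inl rfl) with hσf | hσf <;> rcases hperm g (.inr rfl) with hσg | hσg
  · exact absurd (hσf.trans hσg.symm) hne
  · rw [hσf, hσg]
  · rw [hσf, hσg, add_comm]
  · exact absurd (hσf.trans hσg.symm) hne

namespace ShortVectors

variable {hB : IsLeech B} {w a u : LV}

lemma innerCount_of_nine (h : ShortVectors hB) (hw : vtype B w = 9) :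
    innerCount B (hB.shell 2) 7 w = 1 ∧ innerCount B (hB.shell 3) 9 w = 0 ∨
      innerCount B (hB.shell 2) 7 w = 0 ∧ innerCount B (hB.shell 3) 9 w = 2 := by
  obtain ⟨s, hs⟩ := h.exists_mem_classShell_three (w := w) (by omega)
  have hsw := hB.natAbs_pairZ_of_mem_classShell hs (by omega)
  rw [hB.innerCount_shell_eq_classShell (k' := 3) (j' := -4) (by omega) (by omega),
    hB.innerCount_shell_eq_classShell (k' := 3) (j' := 0) (by omega) (by omega),
    hB.innerCount_classShell_of_mem hs (by norm_num) (by norm_num),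
    hB.innerCount_classShell_of_mem hs (by norm_num) (by norm_num)]
  split_ifs <;> omega

lemma innerCount_of_ten (h : ShortVectors hB) (hw : vtype B w = 10) :
    innerCount B (hB.shell 2) 8 w = 1 ∧ innerCount B (hB.shell 3) 10 w = 0 ∨
      innerCount B (hB.shell 2) 8 w = 0 ∧ innerCount B (hB.shell 3) 10 w = 2 ∨
      innerCount B (hB.shell 2) 8 w = 0 ∧ innerCount B (hB.shell 3) 10 w = 0 ∧
        w ∈ hB.congrShell 10 4 := by
  rw [hB.innerCount_shell_eq_classShell (k' := 2) (j' := -4) (by omega) (by omega),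
    hB.innerCount_shell_eq_classShell (k' := 2) (j' := 0) (by omega) (by omega)]
  rcases h.modTwo_mem_classes_of_even (w := w) (by omega) with hw0 | hw2 | hw4
  · obtain ⟨u, rfl⟩ := hB.modTwo_mem_classes_zero_iff.mp hw0
    have := hB.vtype_two_smul u
    omega
  · obtain ⟨s, hs⟩ := IsLeech.exists_mem_classShell hw2
    have hsw := hB.natAbs_pairZ_of_mem_classShell hs (by omega)
    rw [hB.innerCount_classShell_of_mem hs (by norm_num) (by norm_num),
      hB.innerCount_classShell_of_mem hs (by norm_num) (by norm_num)]
    split_ifs <;> omega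
  · have hzero (j : ℤ) : innerCount B (hB.classShell 2 w) j w = 0 :=
      hB.innerCount_classShell_eq_zero hw4 (by norm_num) (by norm_num) (by norm_num) j
    exact .inr (.inr ⟨hzero _, hzero _, IsLeech.mem_congrShell.mpr ⟨hw, hw4⟩⟩)

lemma innerCount_two_seven_of_mem_sumShell (h : ShortVectors hB) (hw : w ∈ hB.sumShell 9 2 4) :
    innerCount B (hB.shell 2) 7 w = 1 := by
  rw [IsLeech.mem_sumShell (j := 7) (by norm_num)] at hw
  have := h.innerCount_of_nine hw.1
  omega

lemma innerCount_three_nine_of_mem_sumShell (h : ShortVectors hB) (hw : w ∈ hB.sumShell 9 3 3) :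
    innerCount B (hB.shell 3) 9 w = 2 := by
  rw [IsLeech.mem_sumShell (j := 9) (by norm_num)] at hw
  have := h.innerCount_of_nine hw.1
  omega

lemma innerCount_two_eight_of_mem_sumShell (h : ShortVectors hB) (hw : w ∈ hB.sumShell 10 2 4) :
    innerCount B (hB.shell 2) 8 w = 1 := by
  rw [IsLeech.mem_sumShell (j := 8) (by norm_num)] at hw
  have := h.innerCount_of_ten hw.1
  omega

lemma innerCount_three_ten_of_mem_sumShell (h : ShortVectors hB) (hw : w ∈ hB.sumShell 10 3 3) :
    innerCount B (hB.shell 3) 10 w = 2 := by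
  rw [IsLeech.mem_sumShell (j := 10) (by norm_num)] at hw
  have := h.innerCount_of_ten hw.1
  omega

lemma card_sumShell_mul (h : ShortVectors hB) {x k l i j : ℤ} {m : ℕ} (hi : i = x - k - l)
    (hj : j = k + x - l)
    (hm : ∀ w ∈ hB.sumShell x k l, innerCount B (hB.shell k) j w = m)
    (ha : vtype B a = k) (hk : k ≤ 4) :
    (hB.sumShell x k l).card * m = (hB.shell k).card * innerCount B (hB.shell l) i a := by
  subst hj
  rw [← innerCount_neg IsLeech.neg_mem_shell,
    ← hB.innerCount_shell_reflect (k := x) (j := k + x - l) (by omega) (by omega)]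
  exact h.card_filter_mul_eq (fun w hw hpos => hm w ((IsLeech.mem_sumShell rfl).mpr ⟨hw, hpos⟩))
    (fun w _ hw => by omega) ha hk

/-- The sum of the two vectors of the frame of `u` having inner product 6 with `u` is fixed by the
stabilizer of `u`, and subtracting it from `u` leaves a vector of type 6 in the same class. -/
lemma exists_stabilizer_le_of_ten_four (h : ShortVectors hB) (hu : u ∈ hB.congrShell 10 4) :
    ∃ v ∈ hB.congrShell 6 4, MulAction.stabilizer (isometryGroup B) u ≤
      MulAction.stabilizer (isometryGroup B) v := by
  obtain ⟨f, g, hfg, hpair⟩ :=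
    Finset.card_eq_two.mp (h.innerCount_classShell_six_of_ten_four hu)
  have hmem (s : LV) : s ∈ hB.classShell 4 u ∧ pairZ B s u = 6 ↔ s = f ∨ s = g := by
    rw [← Finset.mem_filter (p := (pairZ B · u = 6)), hpair, Finset.mem_insert,
      Finset.mem_singleton]
  obtain ⟨hf, hfu⟩ := (hmem f).mpr (.inl rfl)
  obtain ⟨hg, hgu⟩ := (hmem g).mpr (.inr rfl)
  refine ⟨u - (f + g), ?_, fun σ hσ => ?_⟩
  · have horth : pairZ B f g = 0 := by
      rcases IsLeech.eq_or_eq_neg_or_orthogonal_of_mem_classShell_four hg hf with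
        heq | rfl | horth
      · exact absurd heq hfg
      · rw [pairZ_neg_left] at hfu
        omega
      · exact horth
    rw [IsLeech.mem_congrShell] at hu ⊢
    rw [IsLeech.mem_classShell] at hf hg
    have hclass : modTwo (u - (f + g)) = modTwo u := by
      rw [map_sub, map_add, hf.2, hg.2, ← map_add, ← two_zsmul, modTwo_two_smul, sub_zero]
    rw [hclass, hB.vtype_sub, hB.vtype_add, hB.pairZ_comm u, pairZ_add_left]
    exact ⟨by omega, hu.2⟩
  · rw [MulAction.mem_stabilizer_iff] at hσ ⊢
    have hperm (s : LV) (hs : s = f ∨ s = g) : σ • s = f ∨ σ • s = g := by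
      rw [← hmem] at hs ⊢
      rw [IsLeech.mem_classShell] at hs ⊢
      have hclass := modTwo_smul σ hs.1.2
      have hproduct := pairZ_smul_smul σ s u
      rw [hσ] at hclass hproduct
      exact ⟨⟨(vtype_smul σ s).trans hs.1.1, hclass⟩, hproduct.trans hs.2⟩
    rw [smul_sub, hσ, smul_add_eq_self_of_pair hfg hperm]

end ShortVectors

namespace MinimalCounts

variable {hB : IsLeech B}

lemma card_sumShell_nine_two_four (h : MinimalCounts hB) :
    (hB.sumShell 9 2 4).card = 12441600 * 65520 := by
  obtain ⟨a, ha⟩ := h.exists_vtype_eq_two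
  have hcount := h.card_sumShell_mul (l := 4) (i := 3) (by norm_num) (by norm_num)
    (fun _ => h.innerCount_two_seven_of_mem_sumShell) ha (by norm_num)
  rw [h.card_shell_two, (h.innerCount_four_of_two ha).2.2.2.1] at hcount
  omega

lemma card_sumShell_nine_three_three (h : MinimalCounts hB) :
    (hB.sumShell 9 3 3).card = 32972800 * 65520 := by
  obtain ⟨t, ht⟩ := h.exists_vtype_eq_three
  have hcount := h.card_sumShell_mul (l := 3) (i := 3) (by norm_num) (by norm_num)
    (fun _ => h.innerCount_three_nine_of_mem_sumShell) ht (by norm_num)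
  rw [h.card_shell_three, (h.innerCount_three_of_three ht).2.2] at hcount
  omega

lemma card_sumShell_ten_two_four (h : MinimalCounts hB) :
    (hB.sumShell 10 2 4).card = 279450 * 65520 := by
  obtain ⟨a, ha⟩ := h.exists_vtype_eq_two
  have hcount := h.card_sumShell_mul (l := 4) (i := 4) (by norm_num) (by norm_num)
    (fun _ => h.innerCount_two_eight_of_mem_sumShell) ha (by norm_num)
  rw [h.card_shell_two, (h.innerCount_four_of_two ha).2.2.2.2] at hcount
  omega

lemma card_sumShell_ten_three_three (h : MinimalCounts hB) :
    (hB.sumShell 10 3 3).card = 1430784 * 65520 := by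
  obtain ⟨t, ht⟩ := h.exists_vtype_eq_three
  have hcount := h.card_sumShell_mul (l := 3) (i := 4) (by norm_num) (by norm_num)
    (fun _ => h.innerCount_three_ten_of_mem_sumShell) ht (by norm_num)
  rw [h.card_shell_three, h.innerCount_three_four_of_three ht] at hcount
  omega

lemma mem_sumShell_of_nine (h : MinimalCounts hB) {w : LV} (hw : vtype B w = 9) :
    w ∈ hB.sumShell 9 2 4 ∨ w ∈ hB.sumShell 9 3 3 := by
  rw [IsLeech.mem_sumShell (j := 7) (by norm_num), IsLeech.mem_sumShell (j := 9) (by norm_num)]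
  have := h.innerCount_of_nine hw
  omega

lemma mem_sumShell_or_congrShell_of_ten (h : MinimalCounts hB) {w : LV} (hw : vtype B w = 10) :
    w ∈ hB.sumShell 10 2 4 ∨ w ∈ hB.sumShell 10 3 3 ∨ w ∈ hB.congrShell 10 4 := by
  rw [IsLeech.mem_sumShell (j := 8) (by norm_num), IsLeech.mem_sumShell (j := 10) (by norm_num)]
  rcases h.innerCount_of_ten hw with hcount | hcount | ⟨-, -, hw4⟩
  · omega
  · omega
  · exact .inr (.inr hw4)

end MinimalCounts

namespace OrbitData

variable {hB : IsLeech B} {O O' : Set LV} {x x' c c' : ℕ} {u v : LV}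

lemma dvd_of_stabilizer_le (hO : OrbitData B O x c) (hO' : OrbitData B O' x' c') (hB : IsLeech B)
    (hu : u ∈ O) (hv : v ∈ O') (hle : MulAction.stabilizer (isometryGroup B) u ≤
      MulAction.stabilizer (isometryGroup B) v) : c' ∣ c := by
  have hindex := Subgroup.index_dvd_of_le hle
  rwa [MulAction.index_stabilizer, MulAction.index_stabilizer, ← hO.eq_orbit hB hu,
    ← hO'.eq_orbit hB hv, ← Nat.card_coe_set_eq, ← Nat.card_coe_set_eq, hO.2.2, hO'.2.2] at hindex

lemma notMem_congrShell_ten_four (hO : OrbitData B O 10 c)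
    (h6a : OrbitData B O' 6 (518400 * 65520)) (h : MinimalCounts hB)
    (hc : ¬ 518400 * 65520 ∣ c) (hu : u ∈ O) : u ∉ hB.congrShell 10 4 := fun hu4 => by
  obtain ⟨v, hv, hle⟩ := h.exists_stabilizer_le_of_ten_four hu4
  rw [← Finset.mem_coe, ← h6a.eq_congrShell_six_four h] at hv
  exact hc (hO.dvd_of_stabilizer_le h6a hB hu hv hle)

lemma subset_sumShell (hO : OrbitData B O x c) {k l : ℤ} (hu : u ∈ O)
    (hsum : u ∈ hB.sumShell x k l) : O ⊆ hB.sumShell x k l := fun v hv => by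
  rw [IsLeech.mem_sumShell rfl] at hsum
  rw [Finset.mem_coe, IsLeech.mem_sumShell rfl]
  exact ⟨hO.vtype_eq hv, hO.innerCount_eq hB hu hv _ _ ▸ hsum.2⟩

lemma eq_sumShell (hO : OrbitData B O x c) {k l : ℤ} (hu : u ∈ O)
    (hsum : u ∈ hB.sumShell x k l) (hcard : (hB.sumShell x k l).card ≤ c) :
    O = hB.sumShell x k l :=
  hO.eq_coe_of_subset (hO.subset_sumShell hu hsum) hcard

lemma notMem_sumShell (hO : OrbitData B O x c) {k l : ℤ} (hu : u ∈ O)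
    (hcard : (hB.sumShell x k l).card < c) : u ∉ hB.sumShell x k l := fun hsum => by
  have hO' := hO.eq_sumShell hu hsum hcard.le
  have hc := hO.2.2
  rw [hO', Nat.card_coe_set_eq, Set.ncard_coe_finset] at hc
  omega

lemma eq_sumShell_nine_three_three (h9b : OrbitData B O 9 (32972800 * 65520))
    (h : MinimalCounts hB) : O = hB.sumShell 9 3 3 := by
  obtain ⟨u, hu⟩ := h9b.exists_mem hB
  refine h9b.eq_sumShell hu ?_ h.card_sumShell_nine_three_three.le
  refine (h.mem_sumShell_of_nine (h9b.vtype_eq hu)).resolve_left (h9b.notMem_sumShell hu ?_)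
  exact h.card_sumShell_nine_two_four.trans_lt (by norm_num)

lemma eq_sumShell_nine_two_four (h9a : OrbitData B O 9 (12441600 * 65520))
    (h9b : OrbitData B O' 9 (32972800 * 65520)) (h : MinimalCounts hB) :
    O = hB.sumShell 9 2 4 := by
  obtain ⟨u, hu⟩ := h9a.exists_mem hB
  refine h9a.eq_sumShell hu ?_ h.card_sumShell_nine_two_four.le
  refine (h.mem_sumShell_of_nine (h9a.vtype_eq hu)).resolve_right fun hsum => ?_
  rw [← Finset.mem_coe, ← h9b.eq_sumShell_nine_three_three h] at hsum
  exact h9a.notMem_of_card_ne h9b hB (by norm_num) hu hsum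

lemma eq_sumShell_ten_three_three (h10c : OrbitData B O 10 (1430784 * 65520))
    (h6a : OrbitData B O' 6 (518400 * 65520)) (h : MinimalCounts hB) :
    O = hB.sumShell 10 3 3 := by
  obtain ⟨u, hu⟩ := h10c.exists_mem hB
  refine h10c.eq_sumShell hu ?_ h.card_sumShell_ten_three_three.le
  have hframe := h10c.notMem_congrShell_ten_four h6a h (by norm_num) hu
  have hsum : u ∉ hB.sumShell 10 2 4 :=
    h10c.notMem_sumShell hu (h.card_sumShell_ten_two_four.trans_lt (by norm_num))
  exact ((h.mem_sumShell_or_congrShell_of_ten (h10c.vtype_eq hu)).resolve_left hsum).resolve_right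
    hframe

lemma eq_sumShell_ten_two_four {O6a : Set LV} (h10b : OrbitData B O 10 (279450 * 65520))
    (h10c : OrbitData B O' 10 (1430784 * 65520)) (h6a : OrbitData B O6a 6 (518400 * 65520))
    (h : MinimalCounts hB) : O = hB.sumShell 10 2 4 := by
  obtain ⟨u, hu⟩ := h10b.exists_mem hB
  refine h10b.eq_sumShell hu ?_ h.card_sumShell_ten_two_four.le
  refine (h.mem_sumShell_or_congrShell_of_ten (h10b.vtype_eq hu)).resolve_right ?_
  rintro (hsum | hframe)
  · rw [← Finset.mem_coe, ← h10c.eq_sumShell_ten_three_three h6a h] at hsum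
    exact h10b.notMem_of_card_ne h10c hB (by norm_num) hu hsum
  · exact h10b.notMem_congrShell_ten_four h6a h (by norm_num) hu hframe

lemma eq_congrShell_eight_four (h8b : OrbitData B O 8 (12295800 * 65520)) (h : MinimalCounts hB) :
    O = hB.congrShell 8 4 :=
  h8b.eq_coe_of_subset (fun _ hu => h8b.mem_congrShell_eight_four h.toShortVectors hu)
    h.card_congrShell_eight_four.le

end OrbitData

end OrbitIdentification

section PairCounts

lemma eq_ite {α : Type*} {p : Prop} [Decidable p] {x a b : α} (ha : p → x = a)
    (hb : ¬ p → x = b) : x = if p then a else b := by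
  split_ifs with hp
  exacts [ha hp, hb hp]

namespace IsLeech

variable {hB : IsLeech B} {k l : ℤ} {u v w : LV}

lemma card_pairs_eq_innerCount (hB : IsLeech B) (k l : ℤ) (w : LV) :
    Nat.card {p : LV × LV // p.1 ∈ hB.shell k ∧ p.2 ∈ hB.shell l ∧ p.1 + p.2 = w} =
      innerCount B (hB.shell k) (k + vtype B w - l) w := by
  rw [innerCount, ← Nat.card_eq_finsetCard]
  refine Nat.card_congr
    { toFun := fun p => ⟨p.1.1, ?_⟩
      invFun := fun a => ⟨(a, w - a), ?_⟩
      left_inv := ?_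
      right_inv := fun _ => rfl }
  · obtain ⟨⟨a, b⟩, ha, hb, rfl⟩ := p
    have hself := hB.pairZ_self a
    simp only [Finset.mem_filter, mem_shell] at ha hb ⊢
    rw [hB.vtype_add, pairZ_add_right]
    omega
  · obtain ⟨a, ha⟩ := a
    simp only [Finset.mem_filter, mem_shell] at ha ⊢
    rw [hB.vtype_sub, hB.pairZ_comm]
    exact ⟨ha.1, by omega, by abel⟩
  · rintro ⟨⟨a, b⟩, ha, hb, rfl⟩
    simp

lemma exists_add_eq_of_innerCount_pos (hpos : 0 < innerCount B (hB.shell k) (k + vtype B w - l) w) :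
    ∃ a b, vtype B a = k ∧ vtype B b = l ∧ a + b = w := by
  rw [← hB.card_pairs_eq_innerCount, Nat.card_pos_iff] at hpos
  obtain ⟨⟨⟨a, b⟩, ha, hb, hab⟩⟩ := hpos.1
  exact ⟨a, b, mem_shell.mp ha, mem_shell.mp hb, hab⟩

lemma vtype_add_mem_Icc (hB : IsLeech B) (hne : u ≠ v) (hne_neg : u ≠ -v) :
    vtype B (u + v) ∈ Set.Icc 2 (2 * (vtype B u + vtype B v) - 2) := by
  have := hB.pairZ_le hne
  have := hB.neg_pairZ_le hne_neg
  rw [hB.vtype_add]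
  constructor <;> omega

end IsLeech

namespace ShortVectors

variable {hB : IsLeech B} {w : LV}

lemma innerCount_eq_zero_of_notMem_sumShell {x k l j : ℤ} (hw : vtype B w = x)
    (hj : j = k + x - l) (hsum : w ∉ hB.sumShell x k l) : innerCount B (hB.shell k) j w = 0 := by
  rw [IsLeech.mem_sumShell hj] at hsum
  exact Nat.eq_zero_of_not_pos fun hpos => hsum ⟨hw, hpos⟩

lemma innerCount_eq_zero_of_vtype_mem_Icc (h : ShortVectors hB) {k l : ℤ}
    (hkl : k = 2 ∧ l = 4 ∨ k = 3 ∧ l = 3) (hIcc : vtype B w ∈ Set.Icc 2 10)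
    (h2 : vtype B w ≠ 2) (h3 : vtype B w ≠ 3) (h4 : vtype B w ≠ 4) (h5 : vtype B w ≠ 5)
    (h64 : w ∉ hB.congrShell 6 4) (h62 : w ∉ hB.congrShell 6 2) (h7 : vtype B w ≠ 7)
    (h8 : w ∉ hB.congrShell 8 4) (h9 : w ∉ hB.sumShell 9 k l) (h10 : w ∉ hB.sumShell 10 k l) :
    innerCount B (hB.shell k) (k + vtype B w - l) w = 0 := by
  obtain h6 | h8' | h9' | h10' :
      vtype B w = 6 ∨ vtype B w = 8 ∨ vtype B w = 9 ∨ vtype B w = 10 := by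
    rw [Set.mem_Icc] at hIcc
    omega
  · exact absurd (h.mem_congrShell_two_or_four_of_six h6) (not_or.mpr ⟨h62, h64⟩)
  · have hzero := h.innerCount_eq_zero_of_eight h8' fun hmem =>
      h8 (IsLeech.mem_congrShell.mpr ⟨h8', hmem⟩)
    rw [h8']
    rcases hkl with ⟨rfl, rfl⟩ | ⟨rfl, rfl⟩
    exacts [hzero.1, hzero.2]
  · exact innerCount_eq_zero_of_notMem_sumShell h9' (by rw [h9']) h9
  · exact innerCount_eq_zero_of_notMem_sumShell h10' (by rw [h10']) h10

end ShortVectors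

namespace OrbitData

variable {hB : IsLeech B} {x c : ℕ} {a w : LV}

lemma card_mul_innerCount_of_shell (hO : OrbitData B (hB.shell x) x c) (h : ShortVectors hB)
    (hw : vtype B w = x) {k : ℤ} (ha : vtype B a = k) (hk : k ≤ 4) (j : ℤ) :
    (hB.shell x).card * innerCount B (hB.shell k) j w =
      (hB.shell k).card * innerCount B (hB.shell x) j a :=
  h.card_shell_mul_eq (fun _ hv => hO.innerCount_eq hB (IsLeech.mem_shell.mpr hv)
    (IsLeech.mem_shell.mpr hw) k j) ha hk

lemma innerCount_of_five (h5 : OrbitData B (hB.shell 5) 5 c) (h : MinimalCounts hB)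
    (hw : vtype B w = 5) :
    innerCount B (hB.shell 2) 3 w = 4050 ∧ innerCount B (hB.shell 3) 5 w = 14256 := by
  obtain ⟨a, ha⟩ := h.exists_vtype_eq_two
  obtain ⟨t, ht⟩ := h.exists_vtype_eq_three
  have htwo : (hB.shell 5).card * innerCount B (hB.shell 2) 3 w =
      (hB.shell 2).card * innerCount B (hB.shell 5) 3 a :=
    h5.card_mul_innerCount_of_shell h.toShortVectors hw ha (by norm_num) 3
  have hthree : (hB.shell 5).card * innerCount B (hB.shell 3) 5 w =
      (hB.shell 3).card * innerCount B (hB.shell 5) 5 t :=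
    h5.card_mul_innerCount_of_shell h.toShortVectors hw ht (by norm_num) 5
  rw [hB.innerCount_shell_reflect (w := a) (k' := 4) (j' := 1) (by omega) (by omega),
    h.card_shell_five, h.card_shell_two, (h.innerCount_four_of_two ha).2.1] at htwo
  rw [hB.innerCount_shell_reflect (w := t) (k' := 3) (j' := 1) (by omega) (by omega),
    h.card_shell_five, h.card_shell_three, (h.innerCount_three_of_three ht).2.1] at hthree
  omega

lemma innerCount_of_seven (h7 : OrbitData B (hB.shell 7) 7 c) (h : MinimalCounts hB)
    (hw : vtype B w = 7) :
    innerCount B (hB.shell 2) 5 w = 100 ∧ innerCount B (hB.shell 3) 7 w = 352 := by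
  obtain ⟨a, ha⟩ := h.exists_vtype_eq_two
  obtain ⟨t, ht⟩ := h.exists_vtype_eq_three
  have htwo : (hB.shell 7).card * innerCount B (hB.shell 2) 5 w =
      (hB.shell 2).card * innerCount B (hB.shell 7) 5 a :=
    h7.card_mul_innerCount_of_shell h.toShortVectors hw ha (by norm_num) 5
  have hthree : (hB.shell 7).card * innerCount B (hB.shell 3) 7 w =
      (hB.shell 3).card * innerCount B (hB.shell 7) 7 t :=
    h7.card_mul_innerCount_of_shell h.toShortVectors hw ht (by norm_num) 7
  rw [hB.innerCount_shell_reflect (w := a) (k' := 4) (j' := -1) (by omega) (by omega),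
    innerCount_neg IsLeech.neg_mem_shell, h.card_shell_seven, h.card_shell_two,
    (h.innerCount_four_of_two ha).2.1] at htwo
  rw [hB.innerCount_shell_reflect (w := t) (k' := 3) (j' := -1) (by omega) (by omega),
    innerCount_neg IsLeech.neg_mem_shell, h.card_shell_seven, h.card_shell_three,
    (h.innerCount_three_of_three ht).2.1] at hthree
  omega

end OrbitData

namespace MinimalCounts

variable {hB : IsLeech B} {c5 c6 c7 : ℕ}

open scoped Classical in
theorem card_pairs_two_four (h : MinimalCounts hB) (h5 : OrbitData B (hB.shell 5) 5 c5)
    (h6b : OrbitData B (hB.congrShell 6 2) 6 c6) (h7 : OrbitData B (hB.shell 7) 7 c7) (w : LV) :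
    Nat.card {p : LV × LV // p.1 ∈ hB.shell 2 ∧ p.2 ∈ hB.shell 4 ∧ p.1 + p.2 = w} =
      if w ∈ hB.shell 2 then 93150 else if w ∈ hB.shell 3 then 48600
      else if w ∈ hB.shell 4 then 16192 else if w ∈ hB.shell 5 then 4050
      else if w ∈ hB.congrShell 6 4 then 759 else if w ∈ hB.congrShell 6 2 then 891
      else if w ∈ hB.shell 7 then 100 else if w ∈ hB.congrShell 8 4 then 8
      else if w ∈ hB.sumShell 9 2 4 then 1 else if w ∈ hB.sumShell 10 2 4 then 1 else 0 := by
  rw [hB.card_pairs_eq_innerCount]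
  simp only [IsLeech.mem_shell]
  refine eq_ite (fun w2 => ?_) fun w2 => eq_ite (fun w3 => ?_) fun w3 =>
    eq_ite (fun w4 => ?_) fun w4 => eq_ite (fun w5 => ?_) fun w5 =>
    eq_ite (fun w64 => ?_) fun w64 => eq_ite (fun w62 => ?_) fun w62 =>
    eq_ite (fun w7 => ?_) fun w7 => eq_ite (fun w8 => ?_) fun w8 => eq_ite (fun w9 => ?_) fun w9 =>
    eq_ite (fun w10 => ?_) fun w10 => ?_
  · simpa [w2] using (h.innerCount_two_of_two w2).1
  · simpa [w3] using h.innerCount_two_one_of_three w3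
  · simpa [w4] using h.innerCount_two_two_of_four w4
  · simpa [w5] using (h5.innerCount_of_five h w5).1
  · simpa [(IsLeech.mem_congrShell.mp w64).1] using h.innerCount_two_four_of_six_four w64
  · simpa [(IsLeech.mem_congrShell.mp w62).1] using (h.innerCount_of_six_two h6b w62).1
  · simpa [w7] using (h7.innerCount_of_seven h w7).1
  · simpa [(IsLeech.mem_congrShell.mp w8).1] using (h.innerCount_of_eight_four w8).1
  · simpa [((IsLeech.mem_sumShell rfl).mp w9).1] using h.innerCount_two_seven_of_mem_sumShell w9
  · simpa [((IsLeech.mem_sumShell rfl).mp w10).1] using h.innerCount_two_eight_of_mem_sumShell w10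
  · by_contra hpos
    obtain ⟨a, b, ha, hb, rfl⟩ :=
      IsLeech.exists_add_eq_of_innerCount_pos (Nat.pos_of_ne_zero hpos)
    have hIcc := hB.vtype_add_mem_Icc (u := a) (v := b) (by rintro rfl; omega)
      (by rintro rfl; rw [vtype_neg] at ha; omega)
    rw [ha, hb] at hIcc
    exact hpos (h.innerCount_eq_zero_of_vtype_mem_Icc (.inl ⟨rfl, rfl⟩) hIcc
      w2 w3 w4 w5 w64 w62 w7 w8 w9 w10)

open scoped Classical in
theorem card_pairs_three_three (h : MinimalCounts hB) (h5 : OrbitData B (hB.shell 5) 5 c5)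
    (h6b : OrbitData B (hB.congrShell 6 2) 6 c6) (h7 : OrbitData B (hB.shell 7) 7 c7) (w : LV) :
    Nat.card {p : LV × LV // p.1 ∈ hB.shell 3 ∧ p.2 ∈ hB.shell 3 ∧ p.1 + p.2 = w} =
      if w = 0 then 16773120 else if w ∈ hB.shell 2 then 953856
      else if w ∈ hB.shell 3 then 257600 else if w ∈ hB.shell 4 then 64768
      else if w ∈ hB.shell 5 then 14256 else if w ∈ hB.congrShell 6 4 then 2576
      else if w ∈ hB.congrShell 6 2 then 2816 else if w ∈ hB.shell 7 then 352
      else if w ∈ hB.congrShell 8 4 then 32 else if w ∈ hB.sumShell 9 3 3 then 2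
      else if w ∈ hB.sumShell 10 3 3 then 2
      else if ∃ v ∈ hB.shell 3, w = (2 : ℤ) • v then 1 else 0 := by
  rw [hB.card_pairs_eq_innerCount]
  simp only [IsLeech.mem_shell]
  refine eq_ite (fun w0 => ?_) fun w0 => eq_ite (fun w2 => ?_) fun w2 =>
    eq_ite (fun w3 => ?_) fun w3 => eq_ite (fun w4 => ?_) fun w4 => eq_ite (fun w5 => ?_) fun w5 =>
    eq_ite (fun w64 => ?_) fun w64 => eq_ite (fun w62 => ?_) fun w62 =>
    eq_ite (fun w7 => ?_) fun w7 => eq_ite (fun w8 => ?_) fun w8 => eq_ite (fun w9 => ?_) fun w9 =>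
    eq_ite (fun w10 => ?_) fun w10 => eq_ite (fun w12 => ?_) fun w12 => ?_
  · simp [w0, innerCount, vtype_zero, pairZ_zero_right, h.card_shell_three]
  · simpa [w2] using (h.innerCount_three_of_two w2).2
  · simpa [w3] using (h.innerCount_three_of_three w3).2.2
  · simpa [w4] using h.innerCount_three_four_of_four w4
  · simpa [w5] using (h5.innerCount_of_five h w5).2
  · simpa [(IsLeech.mem_congrShell.mp w64).1] using h.innerCount_three_six_of_six_four w64
  · simpa [(IsLeech.mem_congrShell.mp w62).1] using (h.innerCount_of_six_two h6b w62).2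
  · simpa [w7] using (h7.innerCount_of_seven h w7).2
  · simpa [(IsLeech.mem_congrShell.mp w8).1] using (h.innerCount_of_eight_four w8).2
  · simpa [((IsLeech.mem_sumShell rfl).mp w9).1] using h.innerCount_three_nine_of_mem_sumShell w9
  · simpa [((IsLeech.mem_sumShell rfl).mp w10).1] using h.innerCount_three_ten_of_mem_sumShell w10
  · obtain ⟨v, hv, rfl⟩ := w12
    rw [hB.vtype_two_smul, hv]
    exact hB.innerCount_two_smul 3 hv
  · by_contra hpos
    obtain ⟨a, b, ha, hb, rfl⟩ :=
      IsLeech.exists_add_eq_of_innerCount_pos (Nat.pos_of_ne_zero hpos)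
    have hIcc := hB.vtype_add_mem_Icc (u := a) (v := b)
      (by rintro rfl; exact w12 ⟨a, ha, (two_smul ℤ a).symm⟩)
      (by rintro rfl; exact w0 (neg_add_cancel b))
    rw [ha, hb] at hIcc
    exact hpos (h.innerCount_eq_zero_of_vtype_mem_Icc (.inr ⟨rfl, rfl⟩) hIcc
      w2 w3 w4 w5 w64 w62 w7 w8 w9 w10)

end MinimalCounts

end PairCounts

open scoped Classical in
/-- The decompositions of the Conway orbit products `O₂ ⊗ O₄` and `O₃ ⊗ O₃`: for every
`w ∈ Λ`, the number of ordered pairs `(a,b) ∈ O₂ × O₄` with `a + b = w` is as listed, and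
likewise for `O₃ × O₃`. -/
theorem orbit_product_O2O4_and_O3O3
    (B : Matrix (Fin 24) (Fin 24) ℤ) (hB : IsLeech B)
    (O2 O3 O4 O5 O6a O6b O7 O8b O9a O9b O10b O10c O12a : Set LV)
    (h2 : OrbitData B O2 2 (3 * 65520)) (h3 : OrbitData B O3 3 (256 * 65520))
    (h4 : OrbitData B O4 4 (6075 * 65520)) (h5 : OrbitData B O5 5 (70656 * 65520))
    (h6a : OrbitData B O6a 6 (518400 * 65520)) (h6b : OrbitData B O6b 6 (6900 * 65520))
    (h7 : OrbitData B O7 7 (2861568 * 65520)) (h8b : OrbitData B O8b 8 (12295800 * 65520))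
    (h9a : OrbitData B O9a 9 (12441600 * 65520)) (h9b : OrbitData B O9b 9 (32972800 * 65520))
    (h10b : OrbitData B O10b 10 (279450 * 65520)) (h10c : OrbitData B O10c 10 (1430784 * 65520))
    (h12a : OrbitData B O12a 12 (256 * 65520))
    (h12adbl : O12a = {u : LV | ∃ v ∈ O3, u = (2 : ℤ) • v}) :
    (∀ w : LV,
      Nat.card {p : LV × LV // p.1 ∈ O2 ∧ p.2 ∈ O4 ∧ p.1 + p.2 = w} =
        if w ∈ O2 then 93150 else if w ∈ O3 then 48600 else if w ∈ O4 then 16192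
        else if w ∈ O5 then 4050 else if w ∈ O6a then 759 else if w ∈ O6b then 891
        else if w ∈ O7 then 100 else if w ∈ O8b then 8 else if w ∈ O9a then 1
        else if w ∈ O10b then 1 else 0) ∧
    (∀ w : LV,
      Nat.card {p : LV × LV // p.1 ∈ O3 ∧ p.2 ∈ O3 ∧ p.1 + p.2 = w} =
        if w = 0 then 16773120 else if w ∈ O2 then 953856 else if w ∈ O3 then 257600
        else if w ∈ O4 then 64768 else if w ∈ O5 then 14256 else if w ∈ O6a then 2576
        else if w ∈ O6b then 2816 else if w ∈ O7 then 352 else if w ∈ O8b then 32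
        else if w ∈ O9b then 2 else if w ∈ O10c then 2 else if w ∈ O12a then 1 else 0) := by
  have hS : ShortVectors hB := .of_orbitData h2 h3 h4
  have h : MinimalCounts hB := .of_orbitData hS h6a h8b
  obtain rfl := h9b.eq_sumShell_nine_three_three h
  obtain rfl := h9a.eq_sumShell_nine_two_four h9b h
  obtain rfl := h10c.eq_sumShell_ten_three_three h6a h
  obtain rfl := h10b.eq_sumShell_ten_two_four h10c h6a h
  obtain rfl := h6b.eq_congrShell_six_two h6a h
  obtain rfl := h6a.eq_congrShell_six_four h
  obtain rfl := h8b.eq_congrShell_eight_four h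
  obtain rfl := h2.eq_shell hB hS.card_shell_two.le
  obtain rfl := h3.eq_shell hB hS.card_shell_three.le
  obtain rfl := h4.eq_shell hB hS.card_shell_four.le
  obtain rfl := h5.eq_shell hB h.card_shell_five.le
  obtain rfl := h7.eq_shell hB h.card_shell_seven.le
  subst h12adbl
  convert And.intro (h.card_pairs_two_four h5 h6b h7) (h.card_pairs_three_three h5 h6b h7)
    <;> rfl

end
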